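/- Let k ≥ 2, ε > 0 and 1 ≤ u ≤ 2. For every ε-locally differentially private mechanism Q ∈ D_ε, the ratio of minimax risks satisfies liminf_{n→∞} r_{k,n}^{ℓ_u^u}(Q) / r_{k,n}^{ℓ_u^u}(Q_{k,ε,d*}, p̂) ≥ 1, where p̂ is the empirical estimator under Q_{k,ε,d*}. -/

import Mathlib

/-!
Write `C_u = E|N(0,1)|^u`, `g = g(d*)`, `B = (e^ε - 1)² / g` and `M = (1 - 1/k)² / B`. Both risks
are compared with the same quantity `n^{-u/2} k C_u M^{u/2}`: the minimax risk of every `ε`-private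
mechanism is asymptotically at least this (`minimax_lower`), and the risk of the empirical estimator
under `Q_{k,ε,d*}` is asymptotically at most this (`risk_upper`).

**Lower bound.** Let `μ` be the output law under the uniform input and `f i` the density of `Q i`
with respect to `μ`. For the inputs `p i = 1/k + (t i - mean t) / √n` one observation has density
`1 + (∑ t i (f i - 1)) / √n`, so with the other coordinates frozen this is a one-parameter family in
`t i` with Fisher information about `I i = ∫ (f i - 1)² dμ`. Privacy limits these numbers: pointwise,
`f` lies in a cone whose extreme rays take two values with ratio `e^ε`, and a convex quadratic form
is maximal at such rays, which gives `∑ I i ≤ k B` (`sum_sq_dev_le`). In the one-parameter family the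
scores are bounded, so the likelihood is Gaussian in the parameter up to a factor `e^{±κ}` with a
deterministic `κ = O(1/√n)` (`prod_likelihood`). Under a wide truncated Gaussian prior the posterior
is then nearly Gaussian with precision close to at most `I i`, as soon as the score and the empirical
information are under control, which Chebyshev's inequality provides (`tilt_good`). The loss
`|·|^u` is convex and symmetric, so no guess beats the posterior centre, and the Bayes risk is at
least about `C_u (I i)^{-u/2}` (`oneD`). The frozen coordinates and the estimate of `p i` only
translate and rescale the loss by `(1 - 1/k) / √n`; summing over `i` (`risk_ge_sum`) and applying
Jensen's inequality to `x ↦ x^{-u/2}` together with the information budget gives the claim.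

**Upper bound.** The error of the empirical estimator in a coordinate is a normalized sum of
i.i.d. centred bounded variables. The risk is a supremum over all `p`, so a central limit theorem
uniform in `p` is needed: Lindeberg's replacement argument, applied to the smooth majorant
`(x² + δ²)^{u/2}` of `|x|^u`, bounds the moment by `C_u σ_i^u` with an explicit error
(`lindeberg_bound`). The inclusion probabilities of the scheme add up to `d*`, so by Cauchy–Schwarz
the variances add up to at most `k M`, with the extreme case at the uniform distribution; concavity
of `x ↦ x^{u/2}` gives `∑ σ_i^u ≤ k M^{u/2}`.
-/

open MeasureTheory ProbabilityTheory Filter Real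
open scoped ENNReal NNReal

noncomputable section

/-- The probability simplex Δ_k ⊆ ℝ^k. -/
def simplex (k : ℕ) : Set (Fin k → ℝ) :=
  {p | (∀ i, 0 ≤ p i) ∧ ∑ i, p i = 1}

/-- ε-local differential privacy for a Markov kernel from `Fin k` to `Y`. -/
def IsPrivate {Y : Type} [MeasurableSpace Y] {k : ℕ} (ε : ℝ) (Q : Kernel (Fin k) Y) : Prop :=
  IsMarkovKernel Q ∧
    ∀ S : Set Y, MeasurableSet S → ∀ x x' : Fin k,
      Q x S ≤ ENNReal.ofReal (Real.exp ε) * Q x' S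

/-- The marginal distribution m = pQ of a privatized sample. -/
def marginal {Y : Type} [MeasurableSpace Y] {k : ℕ} (Q : Kernel (Fin k) Y)
    (p : Fin k → ℝ) : Measure Y :=
  ∑ i, ENNReal.ofReal (p i) • Q i

/-- Worst-case ℓ_u^u risk of the mechanism `Q` with estimator `est` from `n` samples. -/
def risk {Y : Type} [MeasurableSpace Y] (k n : ℕ) (u : ℝ) (Q : Kernel (Fin k) Y)
    (est : (Fin n → Y) → Fin k → ℝ) : ℝ≥0∞ :=
  ⨆ p ∈ simplex k,
    ∫⁻ y, ENNReal.ofReal (∑ i, |est y i - p i| ^ u)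
      ∂(Measure.pi fun _ : Fin n => marginal Q p)

/-- Minimax ℓ_u^u risk of the mechanism `Q` from `n` samples. -/
def minimaxRisk {Y : Type} [MeasurableSpace Y] (k n : ℕ) (u : ℝ) (Q : Kernel (Fin k) Y) : ℝ≥0∞ :=
  ⨅ (est : (Fin n → Y) → Fin k → ℝ) (_ : Measurable est), risk k n u Q est

/-- Output alphabet Y_{k,d} : subsets of {1,…,k} of size d. -/
def Out (k d : ℕ) : Type := {S : Finset (Fin k) // S.card = d}

instance (k d : ℕ) : Fintype (Out k d) := Subtype.fintype _
instance (k d : ℕ) : MeasurableSpace (Out k d) := ⊤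
instance (k d : ℕ) : MeasurableSingletonClass (Out k d) := ⟨fun _ => trivial⟩
instance (k d : ℕ) : DecidableEq (Out k d) := Subtype.instDecidableEq

/-- Q_{k,ε,d}(y|i). -/
def schemeP (k : ℕ) (ε : ℝ) (d : ℕ) (i : Fin k) (y : Out k d) : ℝ :=
  (if i ∈ y.1 then Real.exp ε else 1) /
    ((k-1).choose (d-1) * Real.exp ε + (k-1).choose d)

/-- The scheme Q_{k,ε,d} as a Markov kernel. -/
def schemeKernel (k : ℕ) (ε : ℝ) (d : ℕ) : Kernel (Fin k) (Out k d) :=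
  Kernel.ofFunOfCountable fun i =>
    ∑ y : Out k d, ENNReal.ofReal (schemeP k ε d i y) • Measure.dirac y

/-- Constant A of the empirical estimator. -/
def Aconst (k d : ℕ) (ε : ℝ) : ℝ :=
  (((k:ℝ)-1) * Real.exp ε + ((k:ℝ)-1)*((k:ℝ)-d)/d) / (((k:ℝ)-d)*(Real.exp ε - 1))

/-- Constant B of the empirical estimator. -/
def Bconst (k d : ℕ) (ε : ℝ) : ℝ :=
  (((d:ℝ)-1) * Real.exp ε + ((k:ℝ)-d)) / (((k:ℝ)-d)*(Real.exp ε - 1))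

/-- t_i(y^n): the number of privatized samples whose i-th coordinate is 1. -/
def tcount {k d n : ℕ} (i : Fin k) (y : Fin n → Out k d) : ℕ :=
  (Finset.univ.filter fun j => i ∈ (y j).1).card

/-- The empirical estimator p̂ under Q_{k,ε,d}. -/
def empEst (k d n : ℕ) (ε : ℝ) (y : Fin n → Out k d) (i : Fin k) : ℝ :=
  Aconst k d ε * ((tcount i y : ℝ) / n) - Bconst k d ε

/-- Marginal probability (pQ_{k,ε,d})(y). -/
def margP (k : ℕ) (ε : ℝ) (d : ℕ) (p : Fin k → ℝ) (y : Out k d) : ℝ :=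
  ∑ i, p i * schemeP k ε d i y

/-- Membership in D_{ε,E}: a finite-output ε-LDP scheme, given by the matrix
`q j v = Q(j|v)`, whose conditional probability ratios take only values 1 and e^ε. -/
def memDEE (k L : ℕ) (ε : ℝ) (q : Fin L → Fin k → ℝ) : Prop :=
  (∀ j v, 0 ≤ q j v) ∧ (∀ v, ∑ j, q j v = 1) ∧
  (∀ j v v', q j v ≤ Real.exp ε * q j v') ∧
  (∀ j v, q j v / (⨅ v', q j v') ∈ ({1, Real.exp ε} : Set ℝ))

/-- q_j = (1/k) Σ_v q_{jv}. -/
def qrow {k L : ℕ} (q : Fin L → Fin k → ℝ) (j : Fin L) : ℝ :=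
  (1/(k:ℝ)) * ∑ v, q j v

/-- A finite-output scheme (matrix) as a Markov kernel. -/
def matKernel (k L : ℕ) (q : Fin L → Fin k → ℝ) : Kernel (Fin k) (Fin L) :=
  Kernel.ofFunOfCountable fun v =>
    ∑ j, ENNReal.ofReal (q j v) • Measure.dirac j

/-- C_u = E|X|^u for X standard normal. -/
def Cmom (u : ℝ) : ℝ := ∫ x, |x| ^ u ∂(gaussianReal 0 1)

/-- g(s) = (s e^ε + k − s)² / (s(k−s)). -/
def gfun (ε k s : ℝ) : ℝ := (s * Real.exp ε + k - s)^2 / (s * (k - s))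

/-- d* is a minimizer of (d e^ε + k − d)²/(d(k−d)) over d ∈ {1,…,k−1}. -/
def IsOptDstar (k : ℕ) (ε : ℝ) (dstar : ℕ) : Prop :=
  dstar ∈ Finset.Icc 1 (k-1) ∧
    ∀ d ∈ Finset.Icc 1 (k-1), gfun ε k dstar ≤ gfun ε k d

/-- M(k,ε). -/
def Mconst (k : ℕ) (ε : ℝ) (dstar : ℕ) : ℝ :=
  (((k:ℝ)-1)^2 / ((k:ℝ)^2 * (Real.exp ε - 1)^2)) * gfun ε k dstar

/-- The prior set P_n = {p ∈ Δ_k : ‖p − p_U‖₂ ≤ D/√n}. -/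
def Pball (k : ℕ) (D : ℝ) (n : ℕ) : Set (Fin k → ℝ) :=
  {p | p ∈ simplex k ∧ Real.sqrt (∑ i, (p i - 1/(k:ℝ))^2) ≤ D / Real.sqrt n}

/-- The uniform distribution on P_n: normalized (k−1)-dimensional Hausdorff measure. -/
def unifP (k : ℕ) (D : ℝ) (n : ℕ) : Measure (Fin k → ℝ) :=
  ((μH[((k:ℝ)-1)]) (Pball k D n))⁻¹ • (μH[((k:ℝ)-1)]).restrict (Pball k D n)

/-- Component-wise optimal Bayes ℓ_u^u risk for the finite-output scheme `q`,
with the uniform prior on P_n. -/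
def bayesRisk (k L : ℕ) (u : ℝ) (q : Fin L → Fin k → ℝ) (D : ℝ) (n : ℕ) (i : Fin k) : ℝ≥0∞ :=
  ⨅ est : (Fin n → Fin L) → ℝ,
    ∫⁻ p, (∑ y : Fin n → Fin L,
        (∏ j, ENNReal.ofReal (∑ v, p v * q (y j) v)) *
          ENNReal.ofReal (|est y - p i| ^ u))
      ∂(unifP k D n)

end

/-! ### The information budget of a private mechanism -/

/-- A quadratic form `∑ xᵢ² - c (∑ xᵢ)²` with `c ≤ 1` is convex in each coordinate separately, hence
on a box it is dominated by its value at some vertex. -/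
lemma exists_vertex {ι : Type*} [Fintype ι] [DecidableEq ι] {a b c : ℝ} (hc : c ≤ 1)
    (x : ι → ℝ) (hx : ∀ i, a ≤ x i ∧ x i ≤ b) (s : Finset ι) :
    ∃ z : ι → ℝ, (∀ i ∈ s, z i = a ∨ z i = b) ∧ (∀ i, i ∉ s → z i = x i) ∧
      ∑ i, x i ^ 2 - c * (∑ i, x i) ^ 2 ≤ ∑ i, z i ^ 2 - c * (∑ i, z i) ^ 2 := by
  induction s using Finset.induction_on with
  | empty => exact ⟨x, by simp, by simp, le_rfl⟩
  | insert i s his ih =>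
    obtain ⟨z, hz1, hz2, hz3⟩ := ih
    have key : ∀ w : ℝ, ∑ j, (Function.update z i w) j ^ 2
        - c * (∑ j, (Function.update z i w) j) ^ 2
        = w ^ 2 + ∑ j ∈ Finset.univ.erase i, z j ^ 2
          - c * (w + ∑ j ∈ Finset.univ.erase i, z j) ^ 2 := by
      intro w
      rw [← Finset.add_sum_erase _ _ (Finset.mem_univ i), ← Finset.add_sum_erase _ (fun j => Function.update z i w j) (Finset.mem_univ i)]
      have h1 : ∑ j ∈ Finset.univ.erase i, Function.update z i w j ^ 2
          = ∑ j ∈ Finset.univ.erase i, z j ^ 2 :=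
        Finset.sum_congr rfl fun j hj => by
          rw [Function.update_of_ne (Finset.ne_of_mem_erase hj)]
      have h2 : ∑ j ∈ Finset.univ.erase i, Function.update z i w j
          = ∑ j ∈ Finset.univ.erase i, z j :=
        Finset.sum_congr rfl fun j hj => by
          rw [Function.update_of_ne (Finset.ne_of_mem_erase hj)]
      rw [h1, h2]; simp
    have hzi : z i = x i := hz2 i his
    have h0 := key (z i)
    rw [Function.update_eq_self] at h0
    have ha := key a
    have hb := key b
    obtain ⟨hxa, hxb⟩ := hx i
    rw [← hzi] at hxa hxb
    set S2 := ∑ j ∈ Finset.univ.erase i, z j ^ 2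
    set S1 := ∑ j ∈ Finset.univ.erase i, z j
    set w := z i
    have hmem : ∀ v, v = a ∨ v = b →
        ∑ i, z i ^ 2 - c * (∑ i, z i) ^ 2 ≤ ∑ j, (Function.update z i v) j ^ 2
        - c * (∑ j, (Function.update z i v) j) ^ 2 →
        ∃ z : ι → ℝ, (∀ j ∈ insert i s, z j = a ∨ z j = b) ∧ (∀ j, j ∉ insert i s → z j = x j) ∧
        ∑ i, x i ^ 2 - c * (∑ i, x i) ^ 2 ≤ ∑ i, z i ^ 2 - c * (∑ i, z i) ^ 2 := by
      intro v hv hle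
      refine ⟨Function.update z i v, ?_, ?_, hz3.trans hle⟩
      · intro j hj
        by_cases hji : j = i
        · subst hji; simpa using hv
        · rw [Function.update_of_ne hji]
          exact hz1 j ((Finset.mem_insert.1 hj).resolve_left hji)
      · intro j hj
        rw [Finset.mem_insert, not_or] at hj
        rw [Function.update_of_ne hj.1]
        exact hz2 j hj.2
    by_cases hcase : ∑ i, z i ^ 2 - c * (∑ i, z i) ^ 2 ≤ ∑ j, (Function.update z i a) j ^ 2
        - c * (∑ j, (Function.update z i a) j) ^ 2
    · exact hmem a (Or.inl rfl) hcase
    · refine hmem b (Or.inr rfl) ?_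
      rw [h0, ha] at hcase
      rw [h0, hb]
      push Not at hcase
      have e1 : (w - a) * ((1 - c) * (w + a) - 2 * c * S1) > 0 := by nlinarith
      have hwa : 0 < w - a := by
        rcases hxa.lt_or_eq with h | h
        · linarith
        · rw [← h] at e1; simp at e1
      have e2 : 0 < (1 - c) * (w + a) - 2 * c * S1 := by
        by_contra hcon
        push Not at hcon
        nlinarith
      have e3 : 0 ≤ (1 - c) * (b - a) := mul_nonneg (by linarith) (by linarith)
      have e4 : 0 ≤ (b - w) * ((1 - c) * (w + b) - 2 * c * S1) :=
        mul_nonneg (by linarith) (by nlinarith)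
      nlinarith

/-- `(e^ε - 1)² / g(d)`; for `d = d*` this is the largest average over the `k` coordinates of the Fisher
information (at the uniform distribution, in the direction of a coordinate) that an `ε`-private
mechanism can carry. -/
noncomputable def infoBudget (k : ℕ) (ε : ℝ) (d : ℕ) : ℝ := (Real.exp ε - 1) ^ 2 / gfun ε k d

lemma gfun_pos {k d : ℕ} {ε : ℝ} (hd1 : 1 ≤ d) (hd2 : d ≤ k - 1) : 0 < gfun ε k d := by
  have h1 : (1:ℝ) ≤ d := by exact_mod_cast hd1
  have h2 : (d:ℝ) + 1 ≤ k := by exact_mod_cast (by omega : d + 1 ≤ k)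
  have he := Real.exp_pos ε
  unfold gfun
  have h3 : 0 < (d:ℝ) * Real.exp ε := by positivity
  have : 0 < (d:ℝ) * Real.exp ε + k - d := by linarith
  have : 0 < (k:ℝ) - d := by linarith
  positivity

lemma infoBudget_pos {k d : ℕ} {ε : ℝ} (hε : 0 < ε) (hd1 : 1 ≤ d) (hd2 : d ≤ k - 1) :
    0 < infoBudget k ε d := by
  have h := gfun_pos (ε := ε) hd1 hd2
  have he : 1 < Real.exp ε := by simpa using hε
  have : 0 < Real.exp ε - 1 := by linarith
  unfold infoBudget
  positivity

/-- The pointwise form of the information budget: the possible likelihood vectors of one privatized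
output form a cone whose extreme rays take two values with ratio `e^ε`. -/
lemma sum_sq_dev_le {k : ℕ} (hk : 2 ≤ k) {ε : ℝ} (hε : 0 < ε) {d : ℕ} (hd : IsOptDstar k ε d)
    (f : Fin k → ℝ) (hf : ∀ i j, f i ≤ Real.exp ε * f j) (hsum : ∑ i, f i = k) :
    ∑ i, (f i - 1) ^ 2 ≤ k * infoBudget k ε d := by
  classical
  obtain ⟨hdm, hopt⟩ := hd
  rw [Finset.mem_Icc] at hdm
  have he : 1 < Real.exp ε := by simpa using hε
  have hgpos := gfun_pos (ε := ε) hdm.1 hdm.2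
  have hBpos := infoBudget_pos hε hdm.1 hdm.2
  set e := Real.exp ε with he_def
  set B := infoBudget k ε d with hB
  have hk0 : (0:ℝ) < k := by exact_mod_cast (by omega : 0 < k)
  have : Nonempty (Fin k) := ⟨⟨0, by omega⟩⟩
  obtain ⟨i0, hi0⟩ := Finite.exists_min f
  set m := f i0 with hm
  have hmpos : 0 < m := by
    by_contra hcon
    push Not at hcon
    have : ∑ i, f i ≤ 0 := Finset.sum_nonpos fun i _ => (hf i i0).trans (by nlinarith)
    linarith
  -- the value of the ratio `∑ zᵢ² / (∑ zᵢ)²` at a vertex with `j` large coordinates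
  have hvert : ∀ j : ℕ, 1 ≤ j → j ≤ k - 1 →
      (j * e ^ 2 + k - j) = (1 + (e - 1) ^ 2 / gfun ε k j) / k * (j * e + k - j) ^ 2 := by
    intro j h1 h2
    have h1' : (1:ℝ) ≤ j := by exact_mod_cast h1
    have h2' : (j:ℝ) + 1 ≤ k := by exact_mod_cast (by omega : j + 1 ≤ k)
    have h3 : 0 < (j:ℝ) * e := by positivity
    have h4 : (j:ℝ) * e + k - j ≠ 0 := by
      have : 0 < (j:ℝ) * e + k - j := by linarith
      exact this.ne'
    have h5 : (k:ℝ) - j ≠ 0 := by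
      have : 0 < (k:ℝ) - j := by linarith
      exact this.ne'
    have h6 : (j:ℝ) ≠ 0 := by positivity
    unfold gfun
    rw [← he_def]
    field_simp
    ring
  have hc1 : (1 + B) / k ≤ 1 := by
    have h := hvert d hdm.1 hdm.2
    have h1' : (1:ℝ) ≤ d := by exact_mod_cast hdm.1
    have h2' : (d:ℝ) + 1 ≤ k := by exact_mod_cast (by omega : d + 1 ≤ k)
    have hT : 0 < (d:ℝ) * e + k - d := by
      have h3 : 0 < (d:ℝ) * e := by positivity
      linarith
    have hle : (d * e ^ 2 + k - d) ≤ 1 * ((d:ℝ) * e + k - d) ^ 2 := by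
      have a1 : (d:ℝ) * e ^ 2 ≤ (d * e) ^ 2 := by nlinarith [sq_nonneg e]
      have a2 : (k:ℝ) - d ≤ (k - d) ^ 2 := by nlinarith
      have a3 : 0 ≤ (d:ℝ) * e * (k - d) := mul_nonneg (by positivity) (by linarith)
      nlinarith
    rw [h] at hle
    exact le_of_mul_le_mul_right hle (by positivity)
  obtain ⟨z, hz1, -, hz3⟩ := exists_vertex (a := m) (b := e * m) hc1 f
    (fun i => ⟨hi0 i, hf i i0⟩) Finset.univ
  -- count the large coordinates of the vertex
  set T := Finset.univ.filter fun i => z i = e * m with hT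
  have hne : e * m ≠ m := by nlinarith
  have hzT : ∀ i, z i = if i ∈ T then e * m else m := by
    intro i
    by_cases h : z i = e * m
    · simp [hT, h]
    · have := (hz1 i (Finset.mem_univ i)).resolve_right h
      simp [hT, this, hne.symm]
  have hcard : T.card ≤ k := by simpa using Finset.card_le_univ T
  have hcompl : ((Finset.univ.filter fun i => i ∉ T).card : ℝ) = k - T.card := by
    have h := Finset.card_filter_add_card_filter_not (s := (Finset.univ : Finset (Fin k))) (fun i => i ∈ T)
    simp only [Finset.filter_univ_mem, Finset.card_univ, Fintype.card_fin] at h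
    have h' : (T.card : ℝ) + ((Finset.univ.filter fun i => i ∉ T).card : ℝ) = k := by
      exact_mod_cast h
    linarith
  have hS1 : ∑ i, z i = m * (T.card * e + k - T.card) := by
    simp_rw [hzT]
    rw [Finset.sum_ite]
    simp only [Finset.filter_univ_mem, Finset.sum_const, nsmul_eq_mul, hcompl]
    ring
  have hS2 : ∑ i, z i ^ 2 = m ^ 2 * (T.card * e ^ 2 + k - T.card) := by
    have : ∀ i, z i ^ 2 = if i ∈ T then (e * m) ^ 2 else m ^ 2 := by
      intro i; rw [hzT i]; split_ifs <;> rfl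
    simp_rw [this]
    rw [Finset.sum_ite]
    simp only [Finset.filter_univ_mem, Finset.sum_const, nsmul_eq_mul, hcompl]
    ring
  have hz0 : (T.card * e ^ 2 + k - T.card) ≤ (1 + B) / k * (T.card * e + k - T.card) ^ 2 := by
    rcases Nat.eq_zero_or_pos T.card with h0 | h0
    · rw [h0]; simp only [Nat.cast_zero, zero_mul, zero_add, sub_zero]
      have : (1 + B) / k * (k:ℝ) ^ 2 = (1 + B) * k := by field_simp
      rw [this]; nlinarith
    · rcases hcard.lt_or_eq with h1 | h1
      · rw [hvert T.card h0 (by omega)]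
        have hg := hopt T.card (Finset.mem_Icc.2 ⟨h0, by omega⟩)
        have : (e - 1) ^ 2 / gfun ε k T.card ≤ B := by
          rw [hB]; unfold infoBudget; rw [← he_def]; gcongr
        gcongr
      · rw [h1]
        have : (1 + B) / k * ((k:ℝ) * e + k - k) ^ 2 = (1 + B) * k * e ^ 2 := by field_simp; ring
        rw [this]
        have : 0 ≤ B * (k * e ^ 2) := by positivity
        nlinarith
  rw [hS1, hS2, hsum] at hz3
  have h7 : ∑ i, (f i - 1) ^ 2 = ∑ i, f i ^ 2 - k := by
    have : ∀ i, (f i - 1) ^ 2 = f i ^ 2 - 2 * f i + 1 := fun i => by ring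
    simp_rw [this]
    rw [Finset.sum_add_distrib, Finset.sum_sub_distrib, ← Finset.mul_sum, hsum]
    simp; ring
  rw [h7]
  have h8 : (1 + B) / k * (k:ℝ) ^ 2 = k + k * B := by field_simp
  rw [h8] at hz3
  have h9 := mul_le_mul_of_nonneg_left hz0 (sq_nonneg m)
  nlinarith

/-! ### Gaussian posteriors -/

/-- Convexity and symmetry of the loss: moving the centre by `b` and averaging over `± x` costs at
least the centred loss. -/
lemma abs_rpow_le_avg {u : ℝ} (hu : 1 ≤ u) (b x : ℝ) :
    2 * |x| ^ u ≤ |b - x| ^ u + |b + x| ^ u := by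
  have h := (convexOn_rpow hu).2 (Set.mem_Ici.2 (abs_nonneg (b - x)))
    (Set.mem_Ici.2 (abs_nonneg (b + x))) (by norm_num : (0:ℝ) ≤ 1/2) (by norm_num : (0:ℝ) ≤ 1/2)
    (by norm_num)
  simp only [smul_eq_mul] at h
  have h2 : |x| ≤ 1/2 * |b - x| + 1/2 * |b + x| := by
    have := abs_sub (b + x) (b - x)
    rw [show b + x - (b - x) = 2 * x by ring, abs_mul, abs_two] at this
    linarith
  have h3 := Real.rpow_le_rpow (abs_nonneg x) h2 (by linarith : (0:ℝ) ≤ u)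
  linarith

/-- The Gaussian truncated to a symmetric window: moving the centre can only increase the loss. -/
lemma lintegral_shift_ge {u : ℝ} (hu : 1 ≤ u) (b c ρ : ℝ) :
    ∫⁻ x in {x : ℝ | |x| ≤ ρ}, ENNReal.ofReal (|c * x| ^ u) ∂(gaussianReal 0 1)
      ≤ ∫⁻ x in {x : ℝ | |x| ≤ ρ}, ENNReal.ofReal (|b - c * x| ^ u) ∂(gaussianReal 0 1) := by
  set S : Set ℝ := {x : ℝ | |x| ≤ ρ} with hS
  have hSm : MeasurableSet S := measurableSet_le (by fun_prop) (by fun_prop)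
  have hneg : ∫⁻ x in S, ENNReal.ofReal (|b + c * x| ^ u) ∂(gaussianReal 0 1)
      = ∫⁻ x in S, ENNReal.ofReal (|b - c * x| ^ u) ∂(gaussianReal 0 1) := by
    have hmap : (gaussianReal 0 1).map (fun x : ℝ => -x) = gaussianReal 0 1 := by
      simpa using gaussianReal_map_neg (μ := 0) (v := 1)
    conv_lhs => rw [← hmap]
    rw [setLIntegral_map hSm (by fun_prop) (by fun_prop)]
    have : (fun x : ℝ => -x) ⁻¹' S = S := by ext x; simp [hS]
    rw [this]
    simp [sub_eq_add_neg]
  have hle : 2 * ∫⁻ x in S, ENNReal.ofReal (|c * x| ^ u) ∂(gaussianReal 0 1)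
      ≤ 2 * ∫⁻ x in S, ENNReal.ofReal (|b - c * x| ^ u) ∂(gaussianReal 0 1) := by
    nth_rw 2 [two_mul]
    nth_rw 2 [← hneg]
    rw [← lintegral_add_left (by fun_prop), ← lintegral_const_mul _ (by fun_prop)]
    refine lintegral_mono fun x => ?_
    simp only
    rw [← ENNReal.ofReal_add (by positivity) (by positivity),
      show (2:ℝ≥0∞) = ENNReal.ofReal 2 by simp, ← ENNReal.ofReal_mul (by norm_num)]
    exact ENNReal.ofReal_le_ofReal (abs_rpow_le_avg hu b (c * x))
  exact (ENNReal.mul_le_mul_iff_right (by norm_num) (by norm_num)).1 hle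

/-- Completing the square: a centred Gaussian prior of variance `v` tilted by
`exp (tΔ - t² V / 2)` is a multiple of a Gaussian law of precision `V + 1 / v`. -/
lemma gaussian_tilt {v : ℝ≥0} (hv : v ≠ 0) (Δ : ℝ) {V : ℝ} (hV : 0 ≤ V) :
    ∃ c : ℝ≥0∞, (gaussianReal 0 v).withDensity
        (fun t => ENNReal.ofReal (Real.exp (t * Δ - t ^ 2 * V / 2)))
      = c • gaussianReal (Δ / (V + 1 / v)) (Real.toNNReal (1 / (V + 1 / v))) := by
  have hvp : (0:ℝ) < v := by positivity
  have hlam : 0 < V + 1 / (v:ℝ) := by positivity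
  have hw : Real.toNNReal (1 / (V + 1 / (v:ℝ))) ≠ 0 := by
    rw [ne_eq, Real.toNNReal_eq_zero, not_le]; positivity
  refine ⟨ENNReal.ofReal ((√(2 * π * v))⁻¹ * √(2 * π * (1 / (V + 1 / v)))
    * Real.exp (Δ ^ 2 / (2 * (V + 1 / v)))), ?_⟩
  rw [gaussianReal_of_var_ne_zero _ hv, gaussianReal_of_var_ne_zero _ hw,
    ← withDensity_mul _ (measurable_gaussianPDF _ _) (by fun_prop),
    ← withDensity_smul _ (measurable_gaussianPDF _ _)]
  congr 1
  ext t
  simp only [Pi.mul_apply, Pi.smul_apply, smul_eq_mul, gaussianPDF]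
  rw [← ENNReal.ofReal_mul (gaussianPDFReal_nonneg _ _ _), ← ENNReal.ofReal_mul (by positivity)]
  congr 1
  simp only [gaussianPDFReal]
  rw [Real.coe_toNNReal _ (by positivity)]
  have h1 : √(2 * π * (1 / (V + 1 / (v:ℝ)))) ≠ 0 := by positivity
  have h2 : Real.exp (-(t - 0) ^ 2 / (2 * v)) * Real.exp (t * Δ - t ^ 2 * V / 2)
      = Real.exp (Δ ^ 2 / (2 * (V + 1 / v)))
        * Real.exp (-(t - Δ / (V + 1 / v)) ^ 2 / (2 * (1 / (V + 1 / v)))) := by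
    rw [← Real.exp_add, ← Real.exp_add]
    congr 1
    have : (v:ℝ) ≠ 0 := hvp.ne'
    have h3 : V * v + 1 ≠ 0 := by positivity
    field_simp
    ring
  rw [mul_assoc, h2]
  field_simp

/-- If the likelihood is, up to a factor `e^{±κ}`, Gaussian in the parameter and the centre of the
posterior is well inside the truncation window, then no guess `a` has posterior loss below that of
a Gaussian of precision `Λ`. -/
lemma posterior_loss_ge {u : ℝ} (hu : 1 ≤ u) {τ R D Δ V κ Λ : ℝ} (hτ : 0 < τ) (hV : 0 ≤ V)
    (hΔ : |Δ| * τ ^ 2 ≤ D - R) (hR : 0 ≤ R) (hΛ : V + 1 / τ ^ 2 ≤ Λ) (L : ℝ → ℝ)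
    (hL : ∀ t, |t| ≤ D → Real.exp (-κ) * Real.exp (t * Δ - t ^ 2 * V / 2) ≤ L t ∧
      L t ≤ Real.exp κ * Real.exp (t * Δ - t ^ 2 * V / 2)) (a : ℝ) :
    ENNReal.ofReal (Real.exp (-(2 * κ)) * Λ ^ (-(u / 2))) *
      (∫⁻ x in {x : ℝ | |x| ≤ R / τ}, ENNReal.ofReal (|x| ^ u) ∂(gaussianReal 0 1)) *
      ∫⁻ t in Set.Icc (-D) D, ENNReal.ofReal (L t) ∂(gaussianReal 0 (Real.toNNReal (τ ^ 2)))
    ≤ ∫⁻ t in Set.Icc (-D) D, ENNReal.ofReal (L t) * ENNReal.ofReal (|a - t| ^ u)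
        ∂(gaussianReal 0 (Real.toNNReal (τ ^ 2))) := by
  have hτ2 : 0 < τ ^ 2 := by positivity
  have hv : Real.toNNReal (τ ^ 2) ≠ 0 := by rw [ne_eq, Real.toNNReal_eq_zero, not_le]; exact hτ2
  obtain ⟨c, hc⟩ := gaussian_tilt hv Δ hV
  rw [Real.coe_toNNReal _ hτ2.le] at hc
  set lam := V + 1 / τ ^ 2 with hlam_def
  have hlam : 0 < lam := by positivity
  set m := Δ / lam with hm
  set γ := gaussianReal 0 (Real.toNNReal (τ ^ 2))
  set E : ℝ → ℝ := fun t => Real.exp (t * Δ - t ^ 2 * V / 2) with hE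
  have hEm : Measurable fun t => ENNReal.ofReal (E t) := by fun_prop
  set KR := ∫⁻ x in {x : ℝ | |x| ≤ R / τ}, ENNReal.ofReal (|x| ^ u) ∂(gaussianReal 0 1)
  have hIcc : MeasurableSet (Set.Icc (-D) D) := measurableSet_Icc
  -- the evidence is at most `e^κ c`
  have hup : ∫⁻ t in Set.Icc (-D) D, ENNReal.ofReal (L t) ∂γ ≤ ENNReal.ofReal (Real.exp κ) * c := by
    calc ∫⁻ t in Set.Icc (-D) D, ENNReal.ofReal (L t) ∂γ
        ≤ ∫⁻ t in Set.Icc (-D) D, ENNReal.ofReal (Real.exp κ) * ENNReal.ofReal (E t) ∂γ := by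
          refine setLIntegral_mono' hIcc fun t ht => ?_
          rw [← ENNReal.ofReal_mul (Real.exp_pos _).le]
          exact ENNReal.ofReal_le_ofReal (hL t (abs_le.2 ht)).2
      _ ≤ ∫⁻ t, ENNReal.ofReal (Real.exp κ) * ENNReal.ofReal (E t) ∂γ :=
          setLIntegral_le_lintegral _ _
      _ = ENNReal.ofReal (Real.exp κ) * c := by
          rw [lintegral_const_mul _ hEm]
          congr 1
          have := congrArg (fun μ : Measure ℝ => μ Set.univ) hc
          simpa [withDensity_apply] using this
  -- the Gaussian of precision `lam` as an affine image of the standard one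
  have hmap : gaussianReal m (Real.toNNReal (1 / lam))
      = (gaussianReal 0 1).map (fun x => m + (√lam)⁻¹ * x) := by
    have h1 : (fun x : ℝ => m + (√lam)⁻¹ * x) = (fun x => m + x) ∘ (fun x => (√lam)⁻¹ * x) := rfl
    rw [h1, ← Measure.map_map (by fun_prop) (by fun_prop), gaussianReal_map_const_mul,
      gaussianReal_map_const_add]
    congr 1
    · simp
    · ext
      rw [Real.coe_toNNReal _ (by positivity)]
      simp [inv_pow, Real.sq_sqrt hlam.le]
  have hsq : 0 < √lam := Real.sqrt_pos.2 hlam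
  have hgauss : ENNReal.ofReal (Λ ^ (-(u / 2))) * KR
      ≤ ∫⁻ t in Set.Icc (-D) D, ENNReal.ofReal (|a - t| ^ u)
          ∂(gaussianReal m (Real.toNNReal (1 / lam))) := by
    rw [hmap, setLIntegral_map hIcc (by fun_prop) (by fun_prop)]
    have hsub : {x : ℝ | |x| ≤ R / τ} ⊆ {x : ℝ | |x| ≤ R * √lam} := by
      intro x hx
      refine le_trans (show |x| ≤ R / τ from hx) ?_
      rw [div_eq_mul_inv]
      refine mul_le_mul_of_nonneg_left ?_ hR
      refine Real.le_sqrt_of_sq_le ?_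
      rw [inv_pow, hlam_def, one_div]
      linarith
    have hsub2 : {x : ℝ | |x| ≤ R * √lam}
        ⊆ (fun x => m + (√lam)⁻¹ * x) ⁻¹' Set.Icc (-D) D := by
      intro x hx
      have hx' : |x| ≤ R * √lam := hx
      rw [Set.mem_preimage, Set.mem_Icc, ← abs_le]
      have h1 : |(√lam)⁻¹ * x| ≤ R := by
        rw [abs_mul, abs_of_pos (inv_pos.2 hsq), inv_mul_le_iff₀ hsq]
        linarith
      have h2 : |m| ≤ D - R := by
        rw [hm, abs_div, abs_of_pos hlam, div_le_iff₀ hlam]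
        have h3 : 1 ≤ τ ^ 2 * lam := by
          rw [hlam_def, mul_add, mul_one_div, div_self hτ2.ne']
          have : 0 ≤ τ ^ 2 * V := by positivity
          linarith
        have h4 : |Δ| ≤ |Δ| * (τ ^ 2 * lam) := le_mul_of_one_le_right (abs_nonneg _) h3
        nlinarith
      calc |m + (√lam)⁻¹ * x| ≤ |m| + |(√lam)⁻¹ * x| := abs_add_le _ _
        _ ≤ D := by linarith
    calc ENNReal.ofReal (Λ ^ (-(u / 2))) * KR
        ≤ ENNReal.ofReal (lam ^ (-(u / 2))) * KR := by
          refine mul_le_mul_left (ENNReal.ofReal_le_ofReal ?_) _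
          exact Real.rpow_le_rpow_of_nonpos hlam hΛ (by linarith)
      _ = ∫⁻ x in {x : ℝ | |x| ≤ R / τ}, ENNReal.ofReal (|(√lam)⁻¹ * x| ^ u)
            ∂(gaussianReal 0 1) := by
          rw [← lintegral_const_mul _ (by fun_prop)]
          refine lintegral_congr fun x => ?_
          rw [← ENNReal.ofReal_mul (by positivity), abs_mul, abs_of_pos (inv_pos.2 hsq),
            Real.mul_rpow (by positivity) (abs_nonneg _), Real.inv_rpow hsq.le,
            Real.sqrt_eq_rpow, ← Real.rpow_mul hlam.le, Real.rpow_neg hlam.le]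
          congr 4
          ring
      _ ≤ ∫⁻ x in {x : ℝ | |x| ≤ R * √lam}, ENNReal.ofReal (|(√lam)⁻¹ * x| ^ u)
            ∂(gaussianReal 0 1) := lintegral_mono_set hsub
      _ ≤ ∫⁻ x in {x : ℝ | |x| ≤ R * √lam}, ENNReal.ofReal (|(a - m) - (√lam)⁻¹ * x| ^ u)
            ∂(gaussianReal 0 1) := lintegral_shift_ge hu _ _ _
      _ ≤ ∫⁻ x in (fun x => m + (√lam)⁻¹ * x) ⁻¹' Set.Icc (-D) D,
            ENNReal.ofReal (|(a - m) - (√lam)⁻¹ * x| ^ u) ∂(gaussianReal 0 1) :=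
          lintegral_mono_set hsub2
      _ = _ := by
          refine lintegral_congr fun x => ?_
          rw [sub_sub]
  have hlow : ENNReal.ofReal (Real.exp (-κ)) * (c * (ENNReal.ofReal (Λ ^ (-(u / 2))) * KR))
      ≤ ∫⁻ t in Set.Icc (-D) D, ENNReal.ofReal (L t) * ENNReal.ofReal (|a - t| ^ u) ∂γ := by
    calc ENNReal.ofReal (Real.exp (-κ)) * (c * (ENNReal.ofReal (Λ ^ (-(u / 2))) * KR))
        ≤ ENNReal.ofReal (Real.exp (-κ)) * (c * ∫⁻ t in Set.Icc (-D) D,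
            ENNReal.ofReal (|a - t| ^ u) ∂(gaussianReal m (Real.toNNReal (1 / lam)))) := by
          gcongr
      _ = ENNReal.ofReal (Real.exp (-κ)) * ∫⁻ t in Set.Icc (-D) D,
            ENNReal.ofReal (E t) * ENNReal.ofReal (|a - t| ^ u) ∂γ := by
          congr 1
          rw [← smul_eq_mul c, ← lintegral_smul_measure, ← Measure.restrict_smul, ← hc,
            restrict_withDensity hIcc, lintegral_withDensity_eq_lintegral_mul _ hEm (by fun_prop)]
          rfl
      _ = ∫⁻ t in Set.Icc (-D) D, ENNReal.ofReal (Real.exp (-κ)) *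
            (ENNReal.ofReal (E t) * ENNReal.ofReal (|a - t| ^ u)) ∂γ := by
          rw [lintegral_const_mul _ (by fun_prop)]
      _ ≤ _ := by
          refine setLIntegral_mono' hIcc fun t ht => ?_
          rw [← mul_assoc, ← ENNReal.ofReal_mul (Real.exp_pos _).le]
          gcongr
          exact (hL t (abs_le.2 ht)).1
  refine le_trans ?_ hlow
  calc _ ≤ ENNReal.ofReal (Real.exp (-(2 * κ)) * Λ ^ (-(u / 2))) * KR
        * (ENNReal.ofReal (Real.exp κ) * c) := by gcongr
    _ = _ := by
        rw [ENNReal.ofReal_mul (Real.exp_pos _).le]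
        have : ENNReal.ofReal (Real.exp (-κ))
            = ENNReal.ofReal (Real.exp (-(2 * κ))) * ENNReal.ofReal (Real.exp κ) := by
          rw [← ENNReal.ofReal_mul (Real.exp_pos _).le, ← Real.exp_add]
          congr 2; ring
        rw [this]; ring

/-! ### Experiments of independent observations with a small bounded score -/

lemma lintegral_pi_prod {Y : Type} [MeasurableSpace Y] {n : ℕ} (P : Fin n → Measure Y)
    [∀ i, SigmaFinite (P i)] (f : Fin n → Y → ℝ≥0∞) (hf : ∀ i, Measurable (f i)) :
    ∫⁻ y, ∏ j, f j (y j) ∂(Measure.pi P) = ∏ j, ∫⁻ x, f j x ∂(P j) := by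
  induction n with
  | zero => simp
  | succ n ih =>
    rw [← ((measurePreserving_piFinSuccAbove P 0).symm).lintegral_comp_emb
      (MeasurableEquiv.measurableEmbedding _)]
    simp_rw [Fin.prod_univ_succ, MeasurableEquiv.piFinSuccAbove_symm_apply, Fin.insertNthEquiv,
      Fin.zero_succAbove]
    simp only [Equiv.coe_fn_mk, Fin.insertNth_zero', Fin.cons_zero, Fin.cons_succ]
    have hm : Measurable fun y : Fin n → Y => ∏ j, f j.succ (y j) :=
      Finset.measurable_prod _ fun j _ => (hf j.succ).comp (measurable_pi_apply j)
    rw [← ih (fun j => P j.succ) (fun j => f j.succ) fun i => hf i.succ]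
    exact lintegral_prod_mul (hf 0).aemeasurable hm.aemeasurable

/-- The law of `n` independent observations has as density the product of the densities. -/
lemma pi_withDensity {Y : Type} [MeasurableSpace Y] {n : ℕ} (P : Measure Y)
    [IsProbabilityMeasure P] (f : Y → ℝ≥0∞) (hf : Measurable f) [SigmaFinite (P.withDensity f)] :
    Measure.pi (fun _ : Fin n => P.withDensity f)
      = (Measure.pi fun _ : Fin n => P).withDensity fun y => ∏ j, f (y j) := by
  symm
  refine (Measure.pi_eq fun s hs => ?_).symm
  rw [withDensity_apply _ (MeasurableSet.univ_pi hs), ← lintegral_indicator (MeasurableSet.univ_pi hs)]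
  have : ∀ y : Fin n → Y, (Set.univ.pi s).indicator (fun y => ∏ j, f (y j)) y
      = ∏ j, (s j).indicator f (y j) := by
    intro y
    by_cases hy : y ∈ Set.univ.pi s
    · rw [Set.indicator_of_mem hy]
      exact Finset.prod_congr rfl fun j _ => by rw [Set.indicator_of_mem (hy j (Set.mem_univ j))]
    · rw [Set.indicator_of_notMem hy]
      simp only [Set.mem_univ_pi, not_forall] at hy
      obtain ⟨j, hj⟩ := hy
      exact (Finset.prod_eq_zero (Finset.mem_univ j) (Set.indicator_of_notMem hj _)).symm
  simp_rw [this]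
  rw [lintegral_pi_prod _ _ fun i => hf.indicator (hs i)]
  exact Finset.prod_congr rfl fun j _ => by
    rw [lintegral_indicator (hs j), withDensity_apply _ (hs j)]

/-- Chebyshev's inequality for a sum of independent copies of a bounded variable. -/
lemma pi_chebyshev {Y : Type} [MeasurableSpace Y] {n : ℕ} (P : Measure Y) [IsProbabilityMeasure P]
    (g : Y → ℝ) (hg : Measurable g) {C c : ℝ} (hC : ∀ y, |g y| ≤ C) (hc : 0 < c) :
    Measure.pi (fun _ : Fin n => P) {y | c ≤ |∑ j, g (y j) - n * ∫ x, g x ∂P|}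
      ≤ ENNReal.ofReal (n * C ^ 2 / c ^ 2) := by
  have hmem : MemLp g 2 P := MemLp.of_bound hg.aestronglyMeasurable C
    (Eventually.of_forall fun y => by simpa using hC y)
  have hi : Integrable g P := hmem.integrable (by norm_num)
  have hmem' : ∀ j : Fin n, MemLp (fun y : Fin n → Y => g (y j)) 2
      (Measure.pi fun _ : Fin n => P) := fun j =>
    hmem.comp_measurePreserving (measurePreserving_eval (fun _ : Fin n => P) j)
  have hmemS : MemLp (∑ j, fun y : Fin n → Y => g (y j)) 2 (Measure.pi fun _ : Fin n => P) :=
    memLp_finsetSum' _ fun j _ => hmem' j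
  have hvar := variance_sum_pi (μ := fun _ : Fin n => P) (X := fun _ => g) fun _ => hmem
  have hmean : ∫ y, (∑ j, fun y : Fin n → Y => g (y j)) y ∂(Measure.pi fun _ : Fin n => P)
      = n * ∫ x, g x ∂P := by
    simp only [Finset.sum_apply]
    rw [integral_finsetSum _ fun j _ => (hmem' j).integrable (by norm_num)]
    simp_rw [integral_comp_eval (μ := fun _ : Fin n => P) (f := g) hi.aestronglyMeasurable]
    simp
  have h := meas_ge_le_variance_div_sq hmemS hc
  rw [hvar, hmean] at h
  simp only [Finset.sum_apply] at h
  refine h.trans (ENNReal.ofReal_le_ofReal ?_)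
  gcongr
  simp only [Finset.sum_const, Finset.card_univ, Fintype.card_fin, nsmul_eq_mul]
  refine mul_le_mul_of_nonneg_left ?_ (by positivity)
  refine (variance_le_expectation_sq hmem.aestronglyMeasurable).trans ?_
  calc ∫ x, (g ^ 2) x ∂P ≤ ∫ _, C ^ 2 ∂P := by
        refine integral_mono_of_nonneg (Eventually.of_forall fun x => by simp; positivity)
          (integrable_const _) (Eventually.of_forall fun x => ?_)
        simp only [Pi.pow_apply]
        exact sq_le_sq' (abs_le.1 (hC x)).1 (abs_le.1 (hC x)).2
    _ = C ^ 2 := by simp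

lemma abs_log_one_add_sub_le {x : ℝ} (hx : |x| ≤ 1 / 2) :
    |Real.log (1 + x) - (x - x ^ 2 / 2)| ≤ 2 * |x| ^ 3 := by
  have h := Real.abs_log_sub_add_sum_range_le (x := -x) (by rw [abs_neg]; linarith) 2
  simp only [Finset.sum_range_succ, Finset.sum_range_zero, abs_neg, sub_neg_eq_add] at h
  norm_num at h
  have e1 : -x + x ^ 2 / 2 + Real.log (1 + x) = Real.log (1 + x) - (x - x ^ 2 / 2) := by ring
  rw [e1] at h
  refine h.trans ?_
  rw [div_le_iff₀ (by linarith)]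
  have : 0 ≤ |x| ^ 3 := by positivity
  nlinarith

/-- Local asymptotic normality in a deterministic form: a product of factors `1 + t rⱼ / √n` with
bounded `rⱼ` is Gaussian in `t`, up to a factor `e^{±κ}` with `κ = O(1/√n)`. -/
lemma prod_likelihood {n : ℕ} (hn : 0 < n) {C D t : ℝ}
    (ht : |t| ≤ D) (hsmall : D * C / √n ≤ 1 / 2) (r : Fin n → ℝ) (hr : ∀ j, |r j| ≤ C) :
    Real.exp (-(2 * (D * C) ^ 3 / √n)) *
        Real.exp (t * (∑ j, r j / √n) - t ^ 2 * ((∑ j, r j ^ 2) / n) / 2)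
      ≤ ∏ j, (1 + t * r j / √n) ∧
    ∏ j, (1 + t * r j / √n) ≤ Real.exp (2 * (D * C) ^ 3 / √n) *
        Real.exp (t * (∑ j, r j / √n) - t ^ 2 * ((∑ j, r j ^ 2) / n) / 2) := by
  have hn' : (0:ℝ) < n := by exact_mod_cast hn
  have hs : 0 < √(n:ℝ) := Real.sqrt_pos.2 hn'
  have hss : √(n:ℝ) ^ 2 = n := Real.sq_sqrt hn'.le
  have hD : 0 ≤ D := (abs_nonneg t).trans ht
  have hx : ∀ j, |t * r j / √n| ≤ D * C / √n := by
    intro j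
    rw [abs_div, abs_mul, abs_of_pos hs]
    gcongr
    exact hr j
  have hpos : ∀ j, 0 < 1 + t * r j / √n := by
    intro j
    have := (abs_le.1 ((hx j).trans hsmall)).1
    linarith
  have hprod : ∏ j, (1 + t * r j / √n) = Real.exp (∑ j, Real.log (1 + t * r j / √n)) := by
    rw [Real.exp_sum]
    exact Finset.prod_congr rfl fun j _ => (Real.exp_log (hpos j)).symm
  have hsum : |∑ j, Real.log (1 + t * r j / √n)
      - (t * (∑ j, r j / √n) - t ^ 2 * ((∑ j, r j ^ 2) / n) / 2)| ≤ 2 * (D * C) ^ 3 / √n := by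
    have e1 : t * (∑ j, r j / √n) - t ^ 2 * ((∑ j, r j ^ 2) / n) / 2
        = ∑ j, (t * r j / √n - (t * r j / √n) ^ 2 / 2) := by
      rw [Finset.sum_sub_distrib, Finset.mul_sum, Finset.sum_div, Finset.mul_sum, Finset.sum_div]
      congr 1
      · exact Finset.sum_congr rfl fun j _ => by ring
      · refine Finset.sum_congr rfl fun j _ => ?_
        rw [div_pow, hss]; ring
    rw [e1, ← Finset.sum_sub_distrib]
    calc |∑ j, (Real.log (1 + t * r j / √n) - (t * r j / √n - (t * r j / √n) ^ 2 / 2))|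
        ≤ ∑ j : Fin n, 2 * (D * C / √n) ^ 3 := by
          refine (Finset.abs_sum_le_sum_abs _ _).trans (Finset.sum_le_sum fun j _ => ?_)
          refine (abs_log_one_add_sub_le ((hx j).trans hsmall)).trans ?_
          gcongr
          exact hx j
      _ = 2 * (D * C) ^ 3 / √n := by
          simp only [Finset.sum_const, Finset.card_univ, Fintype.card_fin, nsmul_eq_mul]
          rw [div_pow, pow_succ (√(n:ℝ)) 2, hss]
          field_simp
  rw [abs_le] at hsum
  rw [hprod, ← Real.exp_add, ← Real.exp_add]
  constructor <;> apply Real.exp_le_exp.2 <;> linarith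

/-- The one-parameter family through `P` with score `r` at scale `1 / √n`. It consists of probability
measures only for `r` centred and `t` in a range where the density is nonnegative. -/
noncomputable def tilt {Y : Type} [MeasurableSpace Y] (P : Measure Y) (r : Y → ℝ) (n : ℕ) (t : ℝ) : Measure Y :=
  P.withDensity fun y => ENNReal.ofReal (1 + t * r y / √n)

lemma tilt_nonneg {Y : Type} {r : Y → ℝ} {n : ℕ} {t C D : ℝ} (hr : ∀ y, |r y| ≤ C) (ht : |t| ≤ D) (hsmall : D * C / √n ≤ 1 / 2) (y : Y) :
    0 ≤ 1 + t * r y / √n := by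
  have h : |t * r y / √n| ≤ D * C / √n := by
    rw [abs_div, abs_mul, abs_of_nonneg (Real.sqrt_nonneg _)]
    have hD : 0 ≤ D := (abs_nonneg t).trans ht
    gcongr
    exact hr y
  have := (abs_le.1 (h.trans hsmall)).1
  linarith

section tilt
variable {Y : Type} [MeasurableSpace Y] {P : Measure Y} {r : Y → ℝ}
  {n : ℕ} {t C D : ℝ}

lemma integral_tilt (hrm : Measurable r) (hr : ∀ y, |r y| ≤ C) (ht : |t| ≤ D)
    (hsmall : D * C / √n ≤ 1 / 2) (g : Y → ℝ) :
    ∫ y, g y ∂(tilt P r n t) = ∫ y, (1 + t * r y / √n) * g y ∂P := by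
  unfold tilt
  rw [integral_withDensity_eq_integral_toReal_smul (by fun_prop)
    (Eventually.of_forall fun _ => ENNReal.ofReal_lt_top)]
  refine integral_congr_ae (Eventually.of_forall fun y => ?_)
  simp only [smul_eq_mul]
  rw [ENNReal.toReal_ofReal (tilt_nonneg hr ht hsmall y)]

lemma integrable_of_abs_le [IsFiniteMeasure P] {g : Y → ℝ} (hg : Measurable g) (hC : ∀ y, |g y| ≤ C) :
    Integrable g P :=
  Integrable.of_bound hg.aestronglyMeasurable C (Eventually.of_forall fun y => by simpa using hC y)

lemma isProb_tilt [IsProbabilityMeasure P] (hrm : Measurable r) (hr : ∀ y, |r y| ≤ C) (h0 : ∫ y, r y ∂P = 0) (ht : |t| ≤ D)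
    (hsmall : D * C / √n ≤ 1 / 2) : IsProbabilityMeasure (tilt P r n t) := by
  refine ⟨?_⟩
  have hi : Integrable r P := integrable_of_abs_le hrm hr
  have hi2 : Integrable (fun y => t * r y / √n) P := (hi.const_mul t).div_const _
  unfold tilt
  have hi3 : Integrable (fun y => 1 + t * r y / √n) P := (integrable_const 1).add hi2
  rw [withDensity_apply _ MeasurableSet.univ, Measure.restrict_univ,
    ← ofReal_integral_eq_lintegral_ofReal hi3
      (Eventually.of_forall fun y => tilt_nonneg hr ht hsmall y),
    integral_add (integrable_const 1) hi2, integral_div, integral_const_mul, h0]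
  simp

end tilt

/-- Under the parameter `t`, the normalized score stays bounded and the empirical information does
not exceed its mean by much, with probability at least `q`. -/
lemma tilt_good {Y : Type} [MeasurableSpace Y] {P : Measure Y} [IsProbabilityMeasure P] {r : Y → ℝ}
    {n : ℕ} (hn : 0 < n) {C J s D T K q t : ℝ} (hs : 0 < s)
    (hrm : Measurable r) (hr : ∀ y, |r y| ≤ C) (h0 : ∫ y, r y ∂P = 0) (hJ : ∫ y, r y ^ 2 ∂P ≤ J)
    (hTD : T ≤ D) (hsmall : D * C / √n ≤ 1 / 2) (hK : 0 < K)
    (hK1 : 2 * C ^ 2 * T ≤ K) (hK2 : 4 * C ^ 2 / K ^ 2 ≤ (1 - q) / 2)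
    (hn1 : T * C ^ 3 / √n ≤ s / 2) (hn2 : 4 * C ^ 4 / (n * s ^ 2) ≤ (1 - q) / 2) (ht : |t| ≤ T) :
    ENNReal.ofReal q ≤ Measure.pi (fun _ : Fin n => tilt P r n t)
      {y | |∑ j, r (y j) / √n| ≤ K ∧ (∑ j, r (y j) ^ 2) / n ≤ J + s} := by
  have htD : |t| ≤ D := ht.trans hTD
  have : IsProbabilityMeasure (tilt P r n t) := isProb_tilt hrm hr h0 htD hsmall
  have hn' : (0:ℝ) < n := by exact_mod_cast hn
  have hsn : 0 < √(n:ℝ) := Real.sqrt_pos.2 hn'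
  have hss : √(n:ℝ) * √(n:ℝ) = n := Real.mul_self_sqrt hn'.le
  have hT : 0 ≤ T := (abs_nonneg t).trans ht
  have hr2 : ∀ y, |r y ^ 2| ≤ C ^ 2 := fun y => by
    rw [abs_pow]; exact pow_le_pow_left₀ (abs_nonneg _) (hr y) 2
  have hr2' : ∀ y, r y ^ 2 ≤ C ^ 2 := fun y => (le_abs_self _).trans (hr2 y)
  have hi1 : Integrable r P := integrable_of_abs_le hrm hr
  have hi2 : Integrable (fun y => r y ^ 2) P := integrable_of_abs_le (by fun_prop) hr2
  have hi3 : Integrable (fun y => r y ^ 3) P :=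
    integrable_of_abs_le (C := C ^ 3) (by fun_prop) fun y => by
      rw [abs_pow]; exact pow_le_pow_left₀ (abs_nonneg _) (hr y) 3
  have hI0 : 0 ≤ ∫ y, r y ^ 2 ∂P := integral_nonneg fun y => sq_nonneg _
  have hIC : ∫ y, r y ^ 2 ∂P ≤ C ^ 2 := by
    calc ∫ y, r y ^ 2 ∂P ≤ ∫ _, C ^ 2 ∂P := integral_mono hi2 (integrable_const _) hr2'
      _ = C ^ 2 := by simp
  -- the two means under the parameter `t`
  have hm1 : ∫ y, r y ∂(tilt P r n t) = t / √n * ∫ y, r y ^ 2 ∂P := by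
    rw [integral_tilt hrm hr htD hsmall]
    have : ∀ y, (1 + t * r y / √n) * r y = r y + t / √n * r y ^ 2 := fun y => by ring
    simp_rw [this]
    rw [integral_add hi1 (hi2.const_mul _), h0, integral_const_mul, zero_add]
  have hm2 : ∫ y, r y ^ 2 ∂(tilt P r n t) ≤ J + s / 2 := by
    rw [integral_tilt hrm hr htD hsmall]
    have : ∀ y, (1 + t * r y / √n) * r y ^ 2 = r y ^ 2 + t / √n * r y ^ 3 := fun y => by ring
    simp_rw [this]
    rw [integral_add hi2 (hi3.const_mul _), integral_const_mul]
    have h3 : |∫ y, r y ^ 3 ∂P| ≤ C ^ 3 := by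
      have := norm_integral_le_of_norm_le_const (μ := P) (f := fun y => r y ^ 3) (C := C ^ 3)
        (Eventually.of_forall fun y => by
          rw [Real.norm_eq_abs, abs_pow]; exact pow_le_pow_left₀ (abs_nonneg _) (hr y) 3)
      simpa using this
    have h4 : t / √n * ∫ y, r y ^ 3 ∂P ≤ T * C ^ 3 / √n := by
      refine (le_abs_self _).trans ?_
      rw [abs_mul, abs_div, abs_of_pos hsn, div_mul_eq_mul_div]
      gcongr
    linarith
  set G : Set (Fin n → Y) := {y | |∑ j, r (y j) / √n| ≤ K ∧ (∑ j, r (y j) ^ 2) / n ≤ J + s}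
  set m1 := ∫ y, r y ∂(tilt P r n t)
  set m2 := ∫ y, r y ^ 2 ∂(tilt P r n t)
  have hA := pi_chebyshev (n := n) (tilt P r n t) r hrm hr (c := √n * K / 2) (by positivity)
  have hB := pi_chebyshev (n := n) (tilt P r n t) (fun y => r y ^ 2) (by fun_prop) hr2
    (c := n * s / 2) (by positivity)
  have hsub : Gᶜ ⊆ {y | √n * K / 2 ≤ |∑ j, r (y j) - n * m1|} ∪
      {y | n * s / 2 ≤ |∑ j, r (y j) ^ 2 - n * m2|} := by
    intro y hy
    by_contra hcon
    simp only [Set.mem_union, Set.mem_ofPred_eq, not_or, not_le] at hcon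
    apply hy
    constructor
    · rw [← Finset.sum_div, abs_div, abs_of_pos hsn, div_le_iff₀ hsn]
      have h5 : |n * m1| ≤ √n * K / 2 := by
        have e : n * m1 = √n * (t * ∫ y, r y ^ 2 ∂P) := by
          have e2 : (n:ℝ) / √n = √n := Real.div_sqrt
          calc n * m1 = ((n:ℝ) / √n) * (t * ∫ y, r y ^ 2 ∂P) := by rw [hm1]; ring
            _ = _ := by rw [e2]
        rw [e, abs_mul, abs_of_pos hsn, abs_mul, abs_of_nonneg hI0]
        have : |t| * ∫ y, r y ^ 2 ∂P ≤ T * C ^ 2 := by gcongr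
        nlinarith
      have := abs_sub_abs_le_abs_sub (∑ j, r (y j)) (n * m1)
      linarith [hcon.1]
    · rw [div_le_iff₀ hn']
      have := (abs_lt.1 hcon.2).2
      nlinarith
  have hGm : MeasurableSet G := by
    have h1 : MeasurableSet {y : Fin n → Y | |∑ j, r (y j) / √n| ≤ K} :=
      measurableSet_le (by fun_prop) (by fun_prop)
    have h2 : MeasurableSet {y : Fin n → Y | (∑ j, r (y j) ^ 2) / n ≤ J + s} :=
      measurableSet_le (by fun_prop) (by fun_prop)
    exact h1.inter h2
  have hGc : Measure.pi (fun _ : Fin n => tilt P r n t) Gᶜ ≤ ENNReal.ofReal (1 - q) := by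
    refine (measure_mono hsub).trans ((measure_union_le _ _).trans ?_)
    have e : 1 - q = (1 - q) / 2 + (1 - q) / 2 := by ring
    have hq : 0 ≤ (1 - q) / 2 := le_trans (by positivity) hK2
    rw [e, ENNReal.ofReal_add hq hq]
    refine add_le_add (hA.trans (ENNReal.ofReal_le_ofReal ?_))
      (hB.trans (ENNReal.ofReal_le_ofReal ?_))
    · refine le_trans (le_of_eq ?_) hK2
      rw [div_pow, mul_pow, sq (√(n:ℝ)), hss]
      field_simp; norm_num
    · refine le_trans (le_of_eq ?_) hn2
      field_simp; norm_num
  have h1 := prob_compl_eq_one_sub (μ := Measure.pi (fun _ : Fin n => tilt P r n t)) hGm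
  rw [h1] at hGc
  have hle : (1 : ℝ≥0∞) ≤ ENNReal.ofReal (1 - q)
      + Measure.pi (fun _ : Fin n => tilt P r n t) G := tsub_le_iff_right.1 hGc
  have hq : 0 ≤ 1 - q := by
    have : 0 ≤ (1 - q) / 2 := le_trans (by positivity) hK2
    linarith
  by_cases hq0 : q ≤ 0
  · rw [ENNReal.ofReal_of_nonpos hq0]; exact bot_le
  push Not at hq0
  have e1 : (1 : ℝ≥0∞) = ENNReal.ofReal (1 - q) + ENNReal.ofReal q := by
    rw [← ENNReal.ofReal_add hq hq0.le]; simp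
  rw [e1] at hle
  exact (ENNReal.add_le_add_iff_left ENNReal.ofReal_ne_top).1 hle

/-- The Bayes risk of the one-parameter family for a truncated Gaussian prior, for a fixed number of
observations. -/
lemma bayes_core {Y : Type} [MeasurableSpace Y] {P : Measure Y} [IsProbabilityMeasure P] {r : Y → ℝ}
    {n : ℕ} (hn : 0 < n) {u C J τ R D T K q : ℝ} (hu : 1 ≤ u) (hτ : 0 < τ) (hR : 0 ≤ R)
    (hrm : Measurable r) (hr : ∀ y, |r y| ≤ C) (h0 : ∫ y, r y ∂P = 0) (hJ : ∫ y, r y ^ 2 ∂P ≤ J)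
    (hTD : T ≤ D) (hsmall : D * C / √n ≤ 1 / 2) (hK : 0 < K) (hKD : K * τ ^ 2 ≤ D - R)
    (hK1 : 2 * C ^ 2 * T ≤ K) (hK2 : 4 * C ^ 2 / K ^ 2 ≤ (1 - q) / 2)
    (hn1 : T * C ^ 3 / √n ≤ 1 / τ ^ 2 / 2)
    (hn2 : 4 * C ^ 4 / (n * (1 / τ ^ 2) ^ 2) ≤ (1 - q) / 2)
    (est : (Fin n → Y) → ℝ) (hest : Measurable est) :
    ENNReal.ofReal (Real.exp (-(2 * (2 * (D * C) ^ 3 / √n))) * (J + 2 * (1 / τ ^ 2)) ^ (-(u / 2))) *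
      (∫⁻ x in {x : ℝ | |x| ≤ R / τ}, ENNReal.ofReal (|x| ^ u) ∂(gaussianReal 0 1)) *
      (ENNReal.ofReal q * gaussianReal 0 (Real.toNNReal (τ ^ 2)) (Set.Icc (-T) T))
    ≤ ∫⁻ t in Set.Icc (-D) D, ∫⁻ y, ENNReal.ofReal (|est y - t| ^ u)
        ∂(Measure.pi fun _ : Fin n => tilt P r n t) ∂(gaussianReal 0 (Real.toNNReal (τ ^ 2))) := by
  set γ := gaussianReal 0 (Real.toNNReal (τ ^ 2))
  set s := 1 / τ ^ 2 with hs_def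
  have hs : 0 < s := by positivity
  set c := ENNReal.ofReal (Real.exp (-(2 * (2 * (D * C) ^ 3 / √n))) * (J + 2 * s) ^ (-(u / 2))) *
      (∫⁻ x in {x : ℝ | |x| ≤ R / τ}, ENNReal.ofReal (|x| ^ u) ∂(gaussianReal 0 1)) with hc
  set Lk : ℝ → (Fin n → Y) → ℝ := fun t y => ∏ j, (1 + t * r (y j) / √n) with hLk
  have hLm : Measurable (Function.uncurry Lk) := by
    refine Finset.measurable_prod _ fun j _ => ?_
    have h1 : Measurable fun p : ℝ × (Fin n → Y) => r (p.2 j) := by fun_prop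
    exact (measurable_const.add ((measurable_fst.mul h1).div_const _))
  set G : Set (Fin n → Y) := {y | |∑ j, r (y j) / √n| ≤ K ∧ (∑ j, r (y j) ^ 2) / n ≤ J + s} with hG
  have hGm : MeasurableSet G := by
    have h1 : MeasurableSet {y : Fin n → Y | |∑ j, r (y j) / √n| ≤ K} :=
      measurableSet_le (by fun_prop) (by fun_prop)
    have h2 : MeasurableSet {y : Fin n → Y | (∑ j, r (y j) ^ 2) / n ≤ J + s} :=
      measurableSet_le (by fun_prop) (by fun_prop)
    exact h1.inter h2
  have hIcc : MeasurableSet (Set.Icc (-D) D) := measurableSet_Icc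
  have hdens : ∀ t ∈ Set.Icc (-D) D, Measure.pi (fun _ : Fin n => tilt P r n t)
      = (Measure.pi fun _ : Fin n => P).withDensity fun y => ENNReal.ofReal (Lk t y) := by
    intro t ht
    have ht' : |t| ≤ D := abs_le.2 ht
    have hp : IsProbabilityMeasure (tilt P r n t) := isProb_tilt hrm hr h0 ht' hsmall
    unfold tilt at hp ⊢
    rw [pi_withDensity _ _ (by fun_prop)]
    congr 1
    ext y
    rw [hLk, ENNReal.ofReal_prod_of_nonneg fun j _ => tilt_nonneg hr ht' hsmall (y j)]
  have hLt : ∀ t, Measurable fun y => ENNReal.ofReal (Lk t y) := fun t =>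
    (hLm.comp (measurable_const.prodMk measurable_id)).ennreal_ofReal
  have hest' : ∀ t, Measurable fun y => ENNReal.ofReal (|est y - t| ^ u) := fun t => by fun_prop
  calc c * (ENNReal.ofReal q * γ (Set.Icc (-T) T))
      = c * ∫⁻ _ in Set.Icc (-T) T, ENNReal.ofReal q ∂γ := by rw [setLIntegral_const]
    _ ≤ c * ∫⁻ t in Set.Icc (-T) T, Measure.pi (fun _ : Fin n => tilt P r n t) G ∂γ := by
        refine mul_le_mul_right (setLIntegral_mono' measurableSet_Icc fun t ht => ?_) _
        exact tilt_good hn hs hrm hr h0 hJ hTD hsmall hK hK1 hK2 hn1 hn2 (abs_le.2 ht)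
    _ ≤ c * ∫⁻ t in Set.Icc (-D) D, Measure.pi (fun _ : Fin n => tilt P r n t) G ∂γ := by
        refine mul_le_mul_right (lintegral_mono_set ?_) _
        exact Set.Icc_subset_Icc (by linarith) hTD
    _ = c * ∫⁻ t in Set.Icc (-D) D, ∫⁻ y in G, ENNReal.ofReal (Lk t y)
          ∂(Measure.pi fun _ : Fin n => P) ∂γ := by
        congr 1
        refine setLIntegral_congr_fun hIcc fun t ht => ?_
        rw [hdens t ht, withDensity_apply _ hGm]
    _ = c * ∫⁻ y in G, ∫⁻ t in Set.Icc (-D) D, ENNReal.ofReal (Lk t y) ∂γ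
          ∂(Measure.pi fun _ : Fin n => P) := by
        rw [lintegral_lintegral_swap (hLm.ennreal_ofReal.aemeasurable)]
    _ = ∫⁻ y in G, c * ∫⁻ t in Set.Icc (-D) D, ENNReal.ofReal (Lk t y) ∂γ
          ∂(Measure.pi fun _ : Fin n => P) := by
        rw [lintegral_const_mul]
        exact Measurable.lintegral_prod_left' (f := fun p => ENNReal.ofReal (Lk p.1 p.2))
          hLm.ennreal_ofReal
    _ ≤ ∫⁻ y in G, ∫⁻ t in Set.Icc (-D) D, ENNReal.ofReal (Lk t y)
          * ENNReal.ofReal (|est y - t| ^ u) ∂γ ∂(Measure.pi fun _ : Fin n => P) := by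
        refine setLIntegral_mono' hGm fun y hy => ?_
        refine posterior_loss_ge hu hτ (V := (∑ j, r (y j) ^ 2) / n) (by positivity)
          (Δ := ∑ j, r (y j) / √n) ?_ hR ?_ (fun t => Lk t y) ?_ (est y)
        · refine le_trans ?_ hKD
          gcongr
          exact hy.1
        · have := hy.2
          linarith
        · intro t ht
          exact prod_likelihood hn ht hsmall (fun j => r (y j)) fun j => hr _
    _ ≤ ∫⁻ y, ∫⁻ t in Set.Icc (-D) D, ENNReal.ofReal (Lk t y)
          * ENNReal.ofReal (|est y - t| ^ u) ∂γ ∂(Measure.pi fun _ : Fin n => P) :=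
        setLIntegral_le_lintegral _ _
    _ = ∫⁻ t in Set.Icc (-D) D, ∫⁻ y, ENNReal.ofReal (Lk t y)
          * ENNReal.ofReal (|est y - t| ^ u) ∂(Measure.pi fun _ : Fin n => P) ∂γ := by
        rw [lintegral_lintegral_swap]
        refine Measurable.aemeasurable ?_
        have h1 : Measurable fun p : (Fin n → Y) × ℝ => ENNReal.ofReal (Lk p.2 p.1) :=
          (hLm.comp measurable_swap).ennreal_ofReal
        have h2 : Measurable fun p : (Fin n → Y) × ℝ => ENNReal.ofReal (|est p.1 - p.2| ^ u) := by
          have : Measurable fun p : (Fin n → Y) × ℝ => est p.1 := hest.comp measurable_fst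
          fun_prop
        exact h1.mul h2
    _ = _ := by
        refine setLIntegral_congr_fun hIcc fun t ht => ?_
        rw [hdens t ht, lintegral_withDensity_eq_lintegral_mul _ (hLt t) (hest' t)]
        rfl

/-! ### Bayes risk of a one-parameter family -/

lemma integrable_abs_rpow_gaussian {u : ℝ} (hu1 : 1 ≤ u) (hu2 : u ≤ 2) :
    Integrable (fun x : ℝ => |x| ^ u) (gaussianReal 0 1) := by
  have h := (memLp_id_gaussianReal (μ := 0) (v := 1) 2).integrable_sq
  refine Integrable.mono' ((integrable_const (1:ℝ)).add h)
    (Measurable.aestronglyMeasurable (by fun_prop))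
    (Eventually.of_forall fun x => ?_)
  rw [Real.norm_eq_abs, abs_of_nonneg (by positivity)]
  simp only [Pi.add_apply, id]
  rcases le_total (|x|) 1 with hx | hx
  · have := Real.rpow_le_one (abs_nonneg x) hx (by linarith : 0 ≤ u)
    nlinarith [sq_nonneg x]
  · have := Real.rpow_le_rpow_of_exponent_le hx hu2
    rw [Real.rpow_two, sq_abs] at this
    linarith

lemma Cmom_pos {u : ℝ} (hu1 : 1 ≤ u) (hu2 : u ≤ 2) : 0 < Cmom u := by
  unfold Cmom
  rw [integral_pos_iff_support_of_nonneg (fun x => by positivity)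
    (integrable_abs_rpow_gaussian hu1 hu2)]
  have hs : Function.support (fun x : ℝ => |x| ^ u) = {0}ᶜ := by
    ext x
    simp only [Function.mem_support, Set.mem_compl_iff, Set.mem_singleton_iff]
    rw [ne_eq, Real.rpow_eq_zero (abs_nonneg x) (by linarith), abs_eq_zero]
  have : NullSingletonClass (gaussianReal 0 1) := nullSingletonClass_gaussianReal (by norm_num)
  rw [hs, prob_compl_eq_one_sub (measurableSet_singleton _), measure_singleton]
  norm_num

/-- The mass that a measure on the line gives to `[-N, N]` exhausts its total mass. -/
lemma exists_ball_mass (m : Measure ℝ) {X : ℝ≥0∞} (hX : X < m Set.univ) :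
    ∃ N : ℕ, X < m {x : ℝ | |x| ≤ N} := by
  have hmono : Monotone fun N : ℕ => {x : ℝ | |x| ≤ N} := fun a b hab x hx =>
    le_trans (show |x| ≤ a from hx) (by exact_mod_cast hab)
  have hU : (⋃ N : ℕ, {x : ℝ | |x| ≤ N}) = Set.univ := by
    ext x
    obtain ⟨N, hN⟩ := exists_nat_ge |x|
    simp only [Set.mem_iUnion, Set.mem_univ, iff_true]
    exact ⟨N, hN⟩
  have h := tendsto_measure_iUnion_atTop (μ := m) hmono
  rw [hU] at h
  exact (h.eventually (lt_mem_nhds hX)).exists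

/-- One-parameter Bayes bound: for a suitable compactly supported prior, uniformly over all bounded
scores with information at most `J`, the Bayes risk is asymptotically at least that of a Gaussian
with variance `1 / J`. -/
lemma oneD {u C J η : ℝ} (hu1 : 1 ≤ u) (hu2 : u ≤ 2) (hC : 0 < C) (hJ : 0 < J) (hη : 0 < η) :
    ∃ D : ℝ, 0 < D ∧ ∃ ν : Measure ℝ, IsProbabilityMeasure ν ∧ ν (Set.Icc (-D) D)ᶜ = 0 ∧
      ∃ N : ℕ, ∀ n ≥ N, ∀ (Y : Type) [MeasurableSpace Y] (P : Measure Y) [IsProbabilityMeasure P]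
        (r : Y → ℝ), Measurable r → (∀ y, |r y| ≤ C) → ∫ y, r y ∂P = 0 → ∫ y, r y ^ 2 ∂P ≤ J →
        ∀ est : (Fin n → Y) → ℝ, Measurable est →
        ENNReal.ofReal (Cmom u * J ^ (-(u / 2)) - η) ≤
          ∫⁻ t, ∫⁻ y, ENNReal.ofReal (|est y - t| ^ u)
            ∂(Measure.pi fun _ : Fin n => tilt P r n t) ∂ν := by
  have hCm := Cmom_pos hu1 hu2
  set X := Cmom u * J ^ (-(u / 2)) with hX
  have hJu : 0 < J ^ (-(u / 2)) := by positivity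
  have hXp : 0 < X := by positivity
  -- the loss factor: five factors `q` cost at most `η`
  obtain ⟨q, hq0, hq1, hqX⟩ : ∃ q : ℝ, 0 < q ∧ q < 1 ∧ X - η ≤ q ^ 5 * X := by
    set δ := min (1 / 2) (η / (5 * X)) with hδ
    have hδ0 : 0 < δ := lt_min (by norm_num) (by positivity)
    have hδ1 : δ ≤ 1 / 2 := min_le_left _ _
    have hδ2 : δ * (5 * X) ≤ η := by
      rw [← le_div_iff₀ (by positivity)]; exact min_le_right _ _
    refine ⟨1 - δ, by linarith, by linarith, ?_⟩
    have hb := one_add_mul_le_pow (a := -δ) (by linarith) 5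
    have : (1 + 5 * (-δ)) * X ≤ (1 - δ) ^ 5 * X := by
      refine mul_le_mul_of_nonneg_right ?_ hXp.le
      rw [sub_eq_add_neg]; exact_mod_cast hb
    linarith
  -- prior precision
  set s := J * (1 / q - 1) / 2 with hs_def
  have hqinv : 1 < 1 / q := by rw [lt_div_iff₀ hq0]; linarith
  have hs : 0 < s := by
    have : 0 < 1 / q - 1 := by linarith
    positivity
  have hJs : q * J ^ (-(u / 2)) ≤ (J + 2 * s) ^ (-(u / 2)) := by
    have e : J + 2 * s = J * q⁻¹ := by rw [hs_def]; field_simp; ring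
    rw [e, Real.mul_rpow hJ.le (by positivity), Real.inv_rpow hq0.le, ← Real.rpow_neg hq0.le,
      neg_neg, mul_comm]
    refine mul_le_mul_of_nonneg_left ?_ hJu.le
    calc q = q ^ (1:ℝ) := (Real.rpow_one q).symm
      _ ≤ q ^ (u / 2) := Real.rpow_le_rpow_of_exponent_ge hq0 hq1.le (by linarith)
  set τ := 1 / √s with hτ_def
  have hτ : 0 < τ := by positivity
  have hτs : 1 / τ ^ 2 = s := by rw [hτ_def, div_pow, Real.sq_sqrt hs.le]; simp
  obtain ⟨R, hR⟩ : ∃ R : ℕ, ENNReal.ofReal (q * Cmom u) ≤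
      ∫⁻ x in {x : ℝ | |x| ≤ R}, ENNReal.ofReal (|x| ^ u) ∂(gaussianReal 0 1) := by
    have hlt : ENNReal.ofReal (q * Cmom u) < ((gaussianReal 0 1).withDensity
        fun x : ℝ => ENNReal.ofReal (|x| ^ u)) Set.univ := by
      rw [withDensity_apply _ MeasurableSet.univ, Measure.restrict_univ,
        ← ofReal_integral_eq_lintegral_ofReal (integrable_abs_rpow_gaussian hu1 hu2)
          (Eventually.of_forall fun x => by positivity)]
      exact (ENNReal.ofReal_lt_ofReal_iff hCm).2 (by
        show q * Cmom u < Cmom u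
        nlinarith)
    obtain ⟨R, hR⟩ := exists_ball_mass _ hlt
    refine ⟨R, ?_⟩
    rw [withDensity_apply _ (measurableSet_le (by fun_prop) (by fun_prop))] at hR
    exact hR.le
  set γ := gaussianReal 0 (Real.toNNReal (τ ^ 2)) with hγ
  obtain ⟨T, hT⟩ : ∃ T : ℕ, ENNReal.ofReal q ≤ γ (Set.Icc (-(T:ℝ)) T) := by
    have hlt : ENNReal.ofReal q < γ Set.univ := by
      rw [measure_univ]
      exact ENNReal.ofReal_lt_one.2 hq1
    obtain ⟨T, hT⟩ := exists_ball_mass _ hlt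
    refine ⟨T, hT.le.trans (le_of_eq ?_)⟩
    congr 1
    ext x
    exact abs_le (G := ℝ)
  set K := 2 * C ^ 2 * T + 8 * C / (1 - q) with hK_def
  have h1q : 0 < 1 - q := by linarith
  have hK8 : 0 < 8 * C / (1 - q) := by positivity
  have hT0 : (0:ℝ) ≤ T := by positivity
  have hKge : 8 * C / (1 - q) ≤ K := by
    have : 0 ≤ 2 * C ^ 2 * (T:ℝ) := by positivity
    exact (le_add_iff_nonneg_left _).2 this
  have hK : 0 < K := hK8.trans_le hKge
  have hK2 : 4 * C ^ 2 / K ^ 2 ≤ (1 - q) / 2 := by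
    rw [div_le_iff₀ (by positivity)]
    have h1 : (8 * C / (1 - q)) ^ 2 ≤ K ^ 2 := pow_le_pow_left₀ hK8.le hKge 2
    have h2 : (1 - q) / 2 * (8 * C / (1 - q)) ^ 2 ≤ (1 - q) / 2 * K ^ 2 := by gcongr
    refine le_trans ?_ h2
    have e : (1 - q) / 2 * (8 * C / (1 - q)) ^ 2 = 32 * C ^ 2 / (1 - q) := by
      field_simp; ring
    rw [e, le_div_iff₀ h1q]
    nlinarith [sq_nonneg C]
  set D := R * τ + K * τ ^ 2 + T with hD_def
  have hDp : 0 < D := by positivity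
  have hTD : (T:ℝ) ≤ D := by
    have : 0 ≤ (R:ℝ) * τ + K * τ ^ 2 := by positivity
    linarith
  have hKD : K * τ ^ 2 ≤ D - R * τ := by linarith
  -- the sample size
  have hsq : Tendsto (fun n : ℕ => √(n:ℝ)) atTop atTop :=
    Real.tendsto_sqrt_atTop.comp tendsto_natCast_atTop_atTop
  have ev1 : ∀ᶠ n : ℕ in atTop, D * C / √(n:ℝ) ≤ 1 / 2 :=
    (hsq.const_div_atTop (D * C)).eventually (ge_mem_nhds (by norm_num))
  have ev2 : ∀ᶠ n : ℕ in atTop, T * C ^ 3 / √(n:ℝ) ≤ 1 / τ ^ 2 / 2 :=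
    (hsq.const_div_atTop (T * C ^ 3)).eventually (ge_mem_nhds (by positivity))
  have ev3 : ∀ᶠ n : ℕ in atTop, 4 * C ^ 4 / ((n:ℝ) * (1 / τ ^ 2) ^ 2) ≤ (1 - q) / 2 :=
    ((tendsto_natCast_atTop_atTop.atTop_mul_const (by positivity)).const_div_atTop
      (4 * C ^ 4)).eventually (ge_mem_nhds (by positivity))
  have ev4 : ∀ᶠ n : ℕ in atTop, q ≤ Real.exp (-(2 * (2 * (D * C) ^ 3 / √(n:ℝ)))) := by
    have h1 := (((hsq.const_div_atTop (2 * (D * C) ^ 3)).const_mul 2).neg).rexp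
    refine h1.eventually (le_mem_nhds ?_)
    simpa using hq1
  obtain ⟨N, hN⟩ := ((ev1.and (ev2.and (ev3.and ev4))).and (eventually_gt_atTop 0)).exists_forall_of_atTop
  have hmass : γ (Set.Icc (-D) D) ≠ 0 := by
    intro h0
    have := hT.trans ((measure_mono (Set.Icc_subset_Icc (by linarith) hTD)).trans h0.le)
    have h2 : 0 < ENNReal.ofReal q := ENNReal.ofReal_pos.2 hq0
    exact absurd this (not_le.2 h2)
  refine ⟨D, hDp, cond γ (Set.Icc (-D) D), cond_isProbabilityMeasure hmass, ?_, N, ?_⟩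
  · rw [cond_apply measurableSet_Icc]
    simp
  intro n hn Y _ P _ r hrm hr h0 hrJ est hest
  obtain ⟨⟨e1, e2, e3, e4⟩, hn0⟩ := hN n hn
  have core := bayes_core (T := (T:ℝ)) (R := R * τ) hn0 hu1 hτ (by positivity) hrm hr h0 hrJ hTD e1 hK hKD
    (by rw [hK_def]; linarith) hK2 e2 e3 est hest
  have hcond : ∀ f : ℝ → ℝ≥0∞, ∫⁻ t in Set.Icc (-D) D, f t ∂γ
      ≤ ∫⁻ t, f t ∂(cond γ (Set.Icc (-D) D)) := by
    intro f
    rw [ProbabilityTheory.cond, lintegral_smul_measure, smul_eq_mul]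
    refine le_mul_of_one_le_left bot_le ?_
    exact ENNReal.one_le_inv.2 prob_le_one
  refine le_trans ?_ (core.trans (hcond _))
  rw [hτs, mul_div_cancel_right₀ _ hτ.ne']
  calc ENNReal.ofReal (X - η) ≤ ENNReal.ofReal (q * (q * J ^ (-(u / 2))) * (q * Cmom u) * (q * q)) := by
        refine ENNReal.ofReal_le_ofReal (hqX.trans (le_of_eq ?_))
        rw [hX]; ring
    _ = ENNReal.ofReal (q * (q * J ^ (-(u / 2)))) * ENNReal.ofReal (q * Cmom u)
          * (ENNReal.ofReal q * ENNReal.ofReal q) := by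
        rw [ENNReal.ofReal_mul (by positivity), ENNReal.ofReal_mul (by positivity),
          ENNReal.ofReal_mul (p := q) (q := q) (by positivity)]
    _ ≤ _ := by
        refine mul_le_mul' (mul_le_mul' (ENNReal.ofReal_le_ofReal ?_) hR)
          (mul_le_mul' le_rfl hT)
        exact mul_le_mul e4 hJs (by positivity) (Real.exp_pos _).le

/-! ### Densities and the local family around the uniform distribution -/

/-- Densities of a private mechanism with respect to its output law `μ` under the uniform input.
They are chosen so that the privacy constraint and the normalization hold at every point. -/
lemma exists_density {Y : Type} [MeasurableSpace Y] {k : ℕ} (hk : 2 ≤ k) {ε : ℝ}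
    (Q : Kernel (Fin k) Y) (hQ : IsPrivate ε Q) :
    ∃ (μ : Measure Y) (f : Fin k → Y → ℝ), IsProbabilityMeasure μ ∧ (∀ i, Measurable (f i)) ∧
      (∀ y i, 0 ≤ f i y) ∧ (∀ y i j, f i y ≤ Real.exp ε * f j y) ∧ (∀ y, ∑ i, f i y = k) ∧
      ∀ i, Q i = μ.withDensity fun y => ENNReal.ofReal (f i y) := by
  have hM := hQ.1
  have hk0 : (k : ℝ≥0∞) ≠ 0 := by simp; omega
  have hkt : (k : ℝ≥0∞) ≠ ∞ := by simp
  by_cases hε : 0 ≤ ε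
  swap
  · -- a negative budget is impossible
    exfalso
    have h := hQ.2 Set.univ MeasurableSet.univ ⟨0, by omega⟩ ⟨0, by omega⟩
    rw [measure_univ, mul_one, ENNReal.one_le_ofReal, Real.one_le_exp_iff] at h
    exact hε h
  have he : 1 ≤ Real.exp ε := Real.one_le_exp hε
  set μ : Measure Y := (k : ℝ≥0∞)⁻¹ • ∑ i, Q i with hμ
  have hμp : IsProbabilityMeasure μ := ⟨by
    rw [hμ, Measure.smul_apply, Measure.finsetSum_apply]
    simp only [measure_univ, Finset.sum_const, Finset.card_univ, Fintype.card_fin, nsmul_eq_mul,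
      mul_one, smul_eq_mul]
    exact ENNReal.inv_mul_cancel hk0 hkt⟩
  have hkμ : ∀ S, ∑ i, Q i S = k * μ S := by
    intro S
    rw [hμ, Measure.smul_apply, Measure.finsetSum_apply, smul_eq_mul, ← mul_assoc,
      ENNReal.mul_inv_cancel hk0 hkt, one_mul]
  have hac : ∀ i, Q i ≪ μ := by
    intro i S hS
    have h := hkμ S
    rw [hS, mul_zero] at h
    exact Finset.sum_eq_zero_iff.1 h i (Finset.mem_univ i)
  set g : Fin k → Y → ℝ≥0∞ := fun i => (Q i).rnDeriv μ with hg
  have hgm : ∀ i, Measurable (g i) := fun i => Measure.measurable_rnDeriv _ _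
  have hgS : ∀ i S, ∫⁻ y in S, g i y ∂μ = Q i S := fun i S => Measure.setLIntegral_rnDeriv (hac i) S
  have h1 : ∀ i j, g i ≤ᵐ[μ] fun y => ENNReal.ofReal (Real.exp ε) * g j y := by
    intro i j
    refine ae_le_of_forall_setLIntegral_le_of_sigmaFinite (hgm i) fun S hS _ => ?_
    rw [lintegral_const_mul _ (hgm j), hgS, hgS]
    exact hQ.2 S hS i j
  have h2 : (fun y => ∑ i, g i y) =ᵐ[μ] fun _ => (k : ℝ≥0∞) := by
    refine ae_eq_of_forall_setLIntegral_eq_of_sigmaFinite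
      (Finset.measurable_sum _ fun i _ => hgm i) measurable_const fun S hS _ => ?_
    rw [lintegral_finsetSum _ fun i _ => hgm i, setLIntegral_const, ← hkμ]
    exact Finset.sum_congr rfl fun i _ => hgS i S
  set G : Set Y := {y | (∀ i j, g i y ≤ ENNReal.ofReal (Real.exp ε) * g j y) ∧
    ∑ i, g i y = (k : ℝ≥0∞)} with hG
  have hGm : MeasurableSet G := by
    have a1 : MeasurableSet {y | ∀ i j, g i y ≤ ENNReal.ofReal (Real.exp ε) * g j y} := by
      simp only [Set.ofPred_forall]
      exact MeasurableSet.iInter fun i => MeasurableSet.iInter fun j =>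
        measurableSet_le (hgm i) ((hgm j).const_mul _)
    have a2 : MeasurableSet {y | ∑ i, g i y = (k : ℝ≥0∞)} :=
      measurableSet_eq_fun (Finset.measurable_sum _ fun i _ => hgm i) measurable_const
    exact a1.inter a2
  have hGae : ∀ᵐ y ∂μ, y ∈ G := by
    have h1' : ∀ᵐ y ∂μ, ∀ i j, g i y ≤ ENNReal.ofReal (Real.exp ε) * g j y :=
      ae_all_iff.2 fun i => ae_all_iff.2 fun j => h1 i j
    filter_upwards [h1', h2] with y a b using ⟨a, b⟩
  have hfin : ∀ y ∈ G, ∀ i, g i y ≠ ∞ := by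
    intro y hy i
    have : g i y ≤ ∑ i, g i y := Finset.single_le_sum (f := fun i => g i y)
      (fun _ _ => bot_le) (Finset.mem_univ i)
    rw [hy.2] at this
    exact ne_top_of_le_ne_top hkt this
  classical
  refine ⟨μ, fun i => G.piecewise (fun y => (g i y).toReal) (fun _ => 1), hμp,
    fun i => Measurable.piecewise hGm (hgm i).ennreal_toReal measurable_const, ?_, ?_, ?_, ?_⟩
  · intro y i
    by_cases hy : y ∈ G <;> simp [hy]
  · intro y i j
    by_cases hy : y ∈ G
    · simp only [hy, Set.piecewise_eq_of_mem]
      have := ENNReal.toReal_mono (ENNReal.mul_ne_top ENNReal.ofReal_ne_top (hfin y hy j))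
        (hy.1 i j)
      rwa [ENNReal.toReal_mul, ENNReal.toReal_ofReal (by positivity)] at this
    · simpa [hy] using hε
  · intro y
    by_cases hy : y ∈ G
    · simp only [hy, Set.piecewise_eq_of_mem]
      rw [← ENNReal.toReal_sum fun i _ => hfin y hy i, hy.2]
      simp
    · simp [hy]
  · intro i
    rw [← Measure.withDensity_rnDeriv_eq _ _ (hac i)]
    refine withDensity_congr_ae ?_
    filter_upwards [hGae] with y hy
    simp only [hy, Set.piecewise_eq_of_mem]
    rw [ENNReal.ofReal_toReal (hfin y hy i)]

lemma marginal_eq {Y : Type} [MeasurableSpace Y] {k : ℕ} {Q : Kernel (Fin k) Y} {μ : Measure Y}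
    {f : Fin k → Y → ℝ} (hfm : ∀ i, Measurable (f i)) (hf0 : ∀ y i, 0 ≤ f i y)
    (hQ : ∀ i, Q i = μ.withDensity fun y => ENNReal.ofReal (f i y)) {p : Fin k → ℝ}
    (hp : ∀ i, 0 ≤ p i) :
    marginal Q p = μ.withDensity fun y => ENNReal.ofReal (∑ i, p i * f i y) := by
  ext S hS
  unfold marginal
  rw [Measure.finsetSum_apply, withDensity_apply _ hS]
  simp_rw [fun y => ENNReal.ofReal_sum_of_nonneg (s := Finset.univ)
    (f := fun i => p i * f i y) fun i _ => mul_nonneg (hp i) (hf0 y i)]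
  rw [lintegral_finsetSum _ fun i _ => by fun_prop]
  refine Finset.sum_congr rfl fun i _ => ?_
  rw [Measure.smul_apply, smul_eq_mul, hQ i, withDensity_apply _ hS,
    ← lintegral_const_mul _ (by fun_prop)]
  exact lintegral_congr fun y => (ENNReal.ofReal_mul (hp i)).symm

/-- Integrating out a single coordinate first does not change the integral against a product of
probability measures. -/
lemma lintegral_pi_resample {k : ℕ} (ν : Fin k → Measure ℝ) [∀ i, IsProbabilityMeasure (ν i)]
    {F : (Fin k → ℝ) → ℝ≥0∞} (hF : Measurable F) (i : Fin k) :
    ∫⁻ x, F x ∂(Measure.pi ν)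
      = ∫⁻ x, ∫⁻ s, F (Function.update x i s) ∂(ν i) ∂(Measure.pi ν) := by
  set G : (Fin k → ℝ) → ℝ≥0∞ := fun x => ∫⁻ s, F (Function.update x i s) ∂(ν i) with hG
  have hGm : Measurable G := by
    have : Measurable fun p : (Fin k → ℝ) × ℝ => Function.update p.1 i p.2 := by fun_prop
    exact (hF.comp this).lintegral_prod_right'
  have hGG : (fun x => ∫⁻ s, G (Function.update x i s) ∂(ν i)) = G := by
    ext x
    simp [hG]
  rw [lintegral_eq_lmarginal_univ (0 : Fin k → ℝ), lintegral_eq_lmarginal_univ (0 : Fin k → ℝ),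
    lmarginal_erase' F hF (Finset.mem_univ i), lmarginal_erase' G hGm (Finset.mem_univ i), hGG]

/-- Jensen's inequality for a negative power, through the tangent line at `c`. -/
lemma sum_rpow_neg_ge {k : ℕ} {v c : ℝ} (hv : 0 ≤ v) (hc : 0 < c) (x : Fin k → ℝ)
    (hx : ∀ i, 0 < x i) (hsum : ∑ i, x i ≤ k * c) : k * c ^ (-v) ≤ ∑ i, x i ^ (-v) := by
  have h1 : ∀ i, c ^ (-v) * (1 + v * (1 - x i / c)) ≤ x i ^ (-v) := by
    intro i
    have hy : 0 < x i / c := div_pos (hx i) hc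
    have e : x i ^ (-v) = c ^ (-v) * (x i / c) ^ (-v) := by
      rw [← Real.mul_rpow hc.le hy.le, mul_div_cancel₀ _ hc.ne']
    rw [e]
    refine mul_le_mul_of_nonneg_left ?_ (by positivity)
    rw [Real.rpow_def_of_pos hy]
    have a := Real.add_one_le_exp (Real.log (x i / c) * -v)
    have b := Real.log_le_sub_one_of_pos hy
    nlinarith
  refine le_trans ?_ (Finset.sum_le_sum fun i _ => h1 i)
  rw [← Finset.mul_sum, Finset.sum_add_distrib, ← Finset.mul_sum, Finset.sum_sub_distrib,
    ← Finset.sum_div]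
  simp only [Finset.sum_const, Finset.card_univ, Fintype.card_fin, nsmul_eq_mul, mul_one]
  have h2 : (∑ i, x i) / c ≤ k := by rwa [div_le_iff₀ hc]
  have h3 : 0 ≤ v * (k - (∑ i, x i) / c) := mul_nonneg hv (by linarith)
  have h4 : 0 ≤ c ^ (-v) := by positivity
  nlinarith

/-- The localized input distribution with parameter `t`: a perturbation of order `1/√n` of the
uniform distribution, in the direction of the centred vector `t - mean t`. -/
noncomputable def locPt (k n : ℕ) (t : Fin k → ℝ) (i : Fin k) : ℝ :=
  1 / k + (t i - (∑ j, t j) / k) / √n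

/-- The density of one privatized sample under `locPt k n t`, where `φ j = f j - 1` is the score in
the direction of the letter `j`. -/
noncomputable def locDens {Y : Type} {k : ℕ} (φ : Fin k → Y → ℝ) (n : ℕ) (t : Fin k → ℝ) (y : Y) : ℝ :=
  1 + (∑ j, t j * φ j y) / √n

lemma locPt_mem {k n : ℕ} (hk : 2 ≤ k) {D : ℝ} {t : Fin k → ℝ} (ht : ∀ i, |t i| ≤ D)
    (hn : 2 * D / √n ≤ 1 / k) : locPt k n t ∈ simplex k := by
  have hk0 : (0:ℝ) < k := by positivity
  constructor
  · intro i
    have h1 : |(∑ j, t j) / k| ≤ D := by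
      rw [abs_div, abs_of_pos hk0, div_le_iff₀ hk0]
      refine (Finset.abs_sum_le_sum_abs _ _).trans ((Finset.sum_le_sum fun j _ => ht j).trans ?_)
      simp [mul_comm]
    have h2 : |t i - (∑ j, t j) / k| ≤ 2 * D := (abs_sub _ _).trans (by linarith [ht i])
    have h3 : |(t i - (∑ j, t j) / k) / √n| ≤ 1 / k := by
      rw [abs_div, abs_of_nonneg (Real.sqrt_nonneg _)]
      refine le_trans ?_ hn
      gcongr
    unfold locPt
    linarith [(abs_le.1 h3).1]
  · unfold locPt
    rw [Finset.sum_add_distrib, ← Finset.sum_div Finset.univ (fun i => t i - (∑ j, t j) / (k:ℝ)),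
      Finset.sum_sub_distrib]
    simp only [Finset.sum_const, Finset.card_univ, Fintype.card_fin, nsmul_eq_mul]
    rw [mul_one_div_cancel hk0.ne', mul_div_cancel₀ _ hk0.ne']
    simp

lemma locDens_eq {Y : Type} {k n : ℕ} (hk : 2 ≤ k) (f : Fin k → Y → ℝ) (hfs : ∀ y, ∑ i, f i y = k)
    (t : Fin k → ℝ) (y : Y) :
    ∑ i, locPt k n t i * f i y = locDens (fun j y => f j y - 1) n t y := by
  have hk0 : (k:ℝ) ≠ 0 := by positivity
  unfold locPt locDens
  have : ∀ i, (1 / (k:ℝ) + (t i - (∑ j, t j) / k) / √n) * f i y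
      = 1 / k * f i y + (t i * f i y - (∑ j, t j) / k * f i y) / √n := fun i => by ring
  simp_rw [this]
  rw [Finset.sum_add_distrib, ← Finset.mul_sum, ← Finset.sum_div, Finset.sum_sub_distrib,
    ← Finset.mul_sum, hfs, one_div_mul_cancel hk0, div_mul_cancel₀ _ hk0]
  simp_rw [mul_sub, Finset.sum_sub_distrib, mul_one]

lemma abs_sum_score_le {Y : Type} {k : ℕ} {φ : Fin k → Y → ℝ} {D E : ℝ} (hφ : ∀ i y, |φ i y| ≤ E)
    {t : Fin k → ℝ} (ht : ∀ i, |t i| ≤ D) (y : Y) : |∑ j, t j * φ j y| ≤ k * D * E := by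
  refine (Finset.abs_sum_le_sum_abs _ _).trans ?_
  calc ∑ j, |t j * φ j y| ≤ ∑ _j : Fin k, D * E := Finset.sum_le_sum fun j _ => by
        rw [abs_mul]
        exact mul_le_mul (ht j) (hφ j y) (abs_nonneg _) ((abs_nonneg _).trans (ht j))
    _ = _ := by simp [mul_assoc]

/-- With the other coordinates of the parameter frozen at `x`, the localized family is a
one-parameter `tilt` family around a slightly perturbed base law, whose information is at most
`∫ φᵢ² dμ + η`. -/
lemma coord_bound {Y : Type} [MeasurableSpace Y] {k n : ℕ} {μ : Measure Y}
    [IsProbabilityMeasure μ] {φ : Fin k → Y → ℝ} (hφm : ∀ i, Measurable (φ i)) {D E η u : ℝ}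
    (hφ : ∀ i y, |φ i y| ≤ E) (hE : 0 ≤ E) (hφ0 : ∀ i, ∫ y, φ i y ∂μ = 0) (hD : 0 < D)
    (hsmall : k * D * E / √n ≤ 1 / 2) (hη : 2 * (k * D * E / √n) * E ^ 2 ≤ η) (i : Fin k) {X : ℝ≥0∞}
    {ν : Measure ℝ}
    (H : ∀ (P : Measure Y) [IsProbabilityMeasure P] (r : Y → ℝ), Measurable r →
        (∀ y, |r y| ≤ 2 * E) → ∫ y, r y ∂P = 0 → ∫ y, r y ^ 2 ∂P ≤ (∫ y, φ i y ^ 2 ∂μ) + η →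
        ∀ est : (Fin n → Y) → ℝ, Measurable est →
        X ≤ ∫⁻ t, ∫⁻ y, ENNReal.ofReal (|est y - t| ^ u)
            ∂(Measure.pi fun _ : Fin n => tilt P r n t) ∂ν)
    {x : Fin k → ℝ} (hx : ∀ j, |x j| ≤ D) (est : (Fin n → Y) → ℝ) (hest : Measurable est) :
    X ≤ ∫⁻ s, ∫⁻ y, ENNReal.ofReal (|est y - s| ^ u)
      ∂(Measure.pi fun _ : Fin n => μ.withDensity fun y =>
        ENNReal.ofReal (locDens φ n (Function.update x i s) y)) ∂ν := by
  set h : Y → ℝ := fun y => ∑ j, Function.update x i 0 j * φ j y with hh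
  have hhm : Measurable h := Finset.measurable_sum _ fun j _ => (hφm j).const_mul _
  have hx0 : ∀ j, |Function.update x i 0 j| ≤ D := by
    intro j
    by_cases hj : j = i
    · subst hj; simp [hD.le]
    · rw [Function.update_of_ne hj]; exact hx j
  have hhb : ∀ y, |h y| ≤ k * D * E := fun y => abs_sum_score_le hφ hx0 y
  have hφi : ∀ j, Integrable (φ j) μ := fun j => integrable_of_abs_le (hφm j) (hφ j)
  have hh0 : ∫ y, h y ∂μ = 0 := by
    rw [hh, integral_finsetSum _ fun j _ => (hφi j).const_mul _]
    simp [integral_const_mul, hφ0]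
  have hsm : 1 * (k * D * E) / √n ≤ 1 / 2 := by rwa [one_mul]
  have h1 : |(1:ℝ)| ≤ 1 := by simp
  have hP : IsProbabilityMeasure (tilt μ h n 1) := isProb_tilt hhm hhb hh0 h1 hsm
  set a := k * D * E / √n with ha
  have ha0 : 0 ≤ a := by positivity
  -- the perturbed base density
  set w : Y → ℝ := fun y => 1 + 1 * h y / √n with hw
  have hwa : ∀ y, 1 - a ≤ w y := by
    intro y
    have : |1 * h y / √n| ≤ a := by
      rw [one_mul, abs_div, abs_of_nonneg (Real.sqrt_nonneg _)]
      exact div_le_div_of_nonneg_right (hhb y) (Real.sqrt_nonneg _)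
    simp only [hw]
    linarith [(abs_le.1 this).1]
  have hwp : ∀ y, 1 / 2 ≤ w y := fun y => by linarith [hwa y]
  have hwm : Measurable w := by fun_prop
  set r : Y → ℝ := fun y => φ i y / w y with hr
  have hrm : Measurable r := (hφm i).div hwm
  have hrb : ∀ y, |r y| ≤ 2 * E := by
    intro y
    have := hwp y
    have hp : 0 < w y := by linarith
    show |φ i y / w y| ≤ 2 * E
    rw [abs_div, abs_of_pos hp, div_le_iff₀ hp]
    nlinarith [hφ i y]
  have hr0 : ∫ y, r y ∂(tilt μ h n 1) = 0 := by
    rw [integral_tilt hhm hhb h1 hsm, ← hφ0 i]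
    refine integral_congr_ae (Eventually.of_forall fun y => ?_)
    show w y * (φ i y / w y) = φ i y
    rw [mul_div_cancel₀]
    linarith [hwp y]
  have hr2 : ∫ y, r y ^ 2 ∂(tilt μ h n 1) ≤ (∫ y, φ i y ^ 2 ∂μ) + η := by
    rw [integral_tilt hhm hhb h1 hsm]
    have hsq : ∀ y, φ i y ^ 2 ≤ E ^ 2 := fun y => by
      rw [← sq_abs]; exact pow_le_pow_left₀ (abs_nonneg _) (hφ i y) 2
    have hi2 : Integrable (fun y => φ i y ^ 2) μ :=
      integrable_of_abs_le (C := E ^ 2) ((hφm i).pow_const 2) fun y => by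
        rw [abs_of_nonneg (sq_nonneg _)]; exact hsq y
    calc ∫ y, (1 + 1 * h y / √n) * r y ^ 2 ∂μ ≤ ∫ y, (φ i y ^ 2 + η) ∂μ := by
          refine integral_mono_of_nonneg (Eventually.of_forall fun y => ?_)
            (hi2.add (integrable_const _)) (Eventually.of_forall fun y => ?_)
          · have := hwp y
            exact mul_nonneg (le_trans (by norm_num) this) (sq_nonneg _)
          · show w y * (φ i y / w y) ^ 2 ≤ φ i y ^ 2 + η
            have hp : 0 < w y := by linarith [hwp y]
            have e : w y * (φ i y / w y) ^ 2 = φ i y ^ 2 / w y := by field_simp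
            rw [e, div_le_iff₀ hp]
            -- `1 / (1 - a) ≤ 1 + 2 a`
            have h3 : 2 * a * φ i y ^ 2 ≤ η := le_trans (mul_le_mul_of_nonneg_left (hsq y) (by positivity)) hη
            have h4 : 0 ≤ φ i y ^ 2 := sq_nonneg _
            have h5 : (φ i y ^ 2 + 2 * a * φ i y ^ 2) * (1 - a) ≤ (φ i y ^ 2 + η) * w y := by
              refine mul_le_mul (by linarith) (hwa y) (by linarith) ?_
              have : 0 ≤ 2 * a * φ i y ^ 2 := by positivity
              linarith
            have h6 : 0 ≤ a * φ i y ^ 2 * (1 - 2 * a) :=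
              mul_nonneg (by positivity) (by linarith)
            nlinarith
      _ = _ := by rw [integral_add hi2 (integrable_const _)]; simp
  have key := H (tilt μ h n 1) r hrm hrb hr0 hr2 est hest
  have hmeas : ∀ s, tilt (tilt μ h n 1) r n s
      = μ.withDensity fun y => ENNReal.ofReal (locDens φ n (Function.update x i s) y) := by
    intro s
    unfold tilt
    rw [← withDensity_mul _ (by fun_prop) (by fun_prop)]
    congr 1
    ext y
    have hp := hwp y
    rw [Pi.mul_apply, ← ENNReal.ofReal_mul (by show 0 ≤ w y; linarith)]
    congr 1
    show w y * (1 + s * (φ i y / w y) / √n) = _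
    have hne : w y ≠ 0 := by linarith
    have e1 : w y * (1 + s * (φ i y / w y) / √n) = w y + s * φ i y / √n := by field_simp
    have e2 : ∑ j, Function.update x i s j * φ j y = h y + s * φ i y := by
      rw [hh, ← Finset.add_sum_erase _ _ (Finset.mem_univ i)]
      simp only [Function.update_self]
      rw [← Finset.add_sum_erase (a := i) Finset.univ
        (fun j => Function.update x i 0 j * φ j y) (Finset.mem_univ i)]
      simp only [Function.update_self, zero_mul, zero_add]
      rw [add_comm]
      congr 1
      refine Finset.sum_congr rfl fun j hj => ?_
      rw [Function.update_of_ne (Finset.ne_of_mem_erase hj),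
        Function.update_of_ne (Finset.ne_of_mem_erase hj)]
    rw [e1, locDens, e2, hw]
    ring
  simp_rw [hmeas] at key
  exact key

lemma locDens_pos {Y : Type} {k n : ℕ} {φ : Fin k → Y → ℝ} {D E : ℝ} (hφ : ∀ i y, |φ i y| ≤ E)
    (hsmall : k * D * E / √n ≤ 1 / 2) {t : Fin k → ℝ} (ht : ∀ i, |t i| ≤ D) (y : Y) :
    0 ≤ locDens φ n t y := by
  have h : |(∑ j, t j * φ j y) / √n| ≤ 1 / 2 := by
    rw [abs_div, abs_of_nonneg (Real.sqrt_nonneg _)]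
    exact (div_le_div_of_nonneg_right (abs_sum_score_le hφ ht y) (Real.sqrt_nonneg _)).trans hsmall
  unfold locDens
  linarith [(abs_le.1 h).1]

lemma isProb_locDens {Y : Type} [MeasurableSpace Y] {k n : ℕ} {μ : Measure Y}
    [IsProbabilityMeasure μ] {φ : Fin k → Y → ℝ} (hφm : ∀ i, Measurable (φ i)) {D E : ℝ}
    (hφ : ∀ i y, |φ i y| ≤ E) (hφ0 : ∀ i, ∫ y, φ i y ∂μ = 0)
    (hsmall : k * D * E / √n ≤ 1 / 2) {t : Fin k → ℝ} (ht : ∀ i, |t i| ≤ D) :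
    IsProbabilityMeasure (μ.withDensity fun y => ENNReal.ofReal (locDens φ n t y)) := by
  have h := isProb_tilt (P := μ) (r := fun y => ∑ j, t j * φ j y) (n := n) (t := 1)
    (Finset.measurable_sum _ fun j _ => (hφm j).const_mul _) (abs_sum_score_le hφ ht) (D := 1)
    (by rw [integral_finsetSum _ fun j _ => (integrable_of_abs_le (hφm j) (hφ j)).const_mul _]
        simp [integral_const_mul, hφ0])
    (by simp) (by rwa [one_mul])
  unfold tilt at h
  simpa [locDens] using h

/-- The worst-case risk dominates the Bayes risk for a product prior on the local parameter, and the
Bayes risk is bounded coordinate by coordinate. -/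
lemma risk_ge_sum {Y : Type} [MeasurableSpace Y] {k n : ℕ} (hk : 2 ≤ k) (hn : 0 < n)
    {Q : Kernel (Fin k) Y} {μ : Measure Y} [IsProbabilityMeasure μ] {f : Fin k → Y → ℝ}
    (hfm : ∀ i, Measurable (f i)) (hf0 : ∀ y i, 0 ≤ f i y) (hfs : ∀ y, ∑ i, f i y = k)
    (hQ : ∀ i, Q i = μ.withDensity fun y => ENNReal.ofReal (f i y)) {D E η u : ℝ}
    (hφ : ∀ i y, |f i y - 1| ≤ E) (hE : 0 ≤ E) (hφ0 : ∀ i, ∫ y, (f i y - 1) ∂μ = 0) (hD : 0 < D)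
    (hsmall : k * D * E / √n ≤ 1 / 2) (hη : 2 * (k * D * E / √n) * E ^ 2 ≤ η)
    (hsimp : 2 * D / √n ≤ 1 / k) (X : Fin k → ℝ)
    (ν : Fin k → Measure ℝ) [∀ i, IsProbabilityMeasure (ν i)]
    (hν : ∀ i, ν i (Set.Icc (-D) D)ᶜ = 0)
    (H : ∀ i, ∀ (P : Measure Y) [IsProbabilityMeasure P] (r : Y → ℝ), Measurable r →
        (∀ y, |r y| ≤ 2 * E) → ∫ y, r y ∂P = 0 →
        ∫ y, r y ^ 2 ∂P ≤ (∫ y, (f i y - 1) ^ 2 ∂μ) + η →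
        ∀ est : (Fin n → Y) → ℝ, Measurable est →
        ENNReal.ofReal (X i) ≤ ∫⁻ t, ∫⁻ y, ENNReal.ofReal (|est y - t| ^ u)
            ∂(Measure.pi fun _ : Fin n => tilt P r n t) ∂(ν i))
    (est : (Fin n → Y) → Fin k → ℝ) (hest : Measurable est) :
    ENNReal.ofReal (((1 - 1 / k) / √n) ^ u * ∑ i, X i) ≤ risk k n u Q est := by
  set φ : Fin k → Y → ℝ := fun i y => f i y - 1 with hφ_def
  have hφm : ∀ i, Measurable (φ i) := fun i => (hfm i).sub_const _
  have hsn : 0 < √(n:ℝ) := Real.sqrt_pos.2 (by exact_mod_cast hn)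
  have hk0 : (0:ℝ) < k := by positivity
  have hk1 : (1:ℝ) / k < 1 := by
    rw [div_lt_one hk0]; exact_mod_cast (by omega : 1 < k)
  set b := (1 - 1 / (k:ℝ)) / √n with hb
  have hbp : 0 < b := div_pos (by linarith) hsn
  have hesti : ∀ i, Measurable fun y => est y i := fun i => (measurable_pi_apply i).comp hest
  have hbox : ∀ᵐ t ∂(Measure.pi ν), ∀ i, |t i| ≤ D := by
    refine ae_all_iff.2 fun i => ?_
    have : ∀ᵐ s ∂(ν i), |s| ≤ D := by
      rw [ae_iff]
      refine measure_mono_null (fun s hs => ?_) (hν i)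
      intro hs'
      exact hs (abs_le.2 hs')
    exact (measurePreserving_eval ν i).quasiMeasurePreserving.ae this
  -- the loss of coordinate `i`, written against the base measure
  set F : Fin k → (Fin k → ℝ) → ℝ≥0∞ := fun i t =>
    ∫⁻ y, (∏ j, ENNReal.ofReal (locDens φ n t (y j))) * ENNReal.ofReal (|est y i - locPt k n t i| ^ u)
      ∂(Measure.pi fun _ : Fin n => μ) with hF
  have hdm2 : Measurable fun p : (Fin k → ℝ) × Y => locDens φ n p.1 p.2 := by
    unfold locDens
    have : ∀ j, Measurable fun p : (Fin k → ℝ) × Y => p.1 j * φ j p.2 := fun j =>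
      ((measurable_pi_apply j).comp measurable_fst).mul ((hφm j).comp measurable_snd)
    exact ((Finset.measurable_sum _ fun j _ => this j).div_const _).const_add _
  have hdm : ∀ t, Measurable fun y => ENNReal.ofReal (locDens φ n t y) := fun t =>
    (hdm2.comp (measurable_const.prodMk measurable_id)).ennreal_ofReal
  have hptm : ∀ i, Measurable fun t : Fin k → ℝ => locPt k n t i := by
    intro i; unfold locPt; fun_prop
  have hFm : ∀ i, Measurable (F i) := by
    intro i
    have h1 : Measurable fun p : (Fin k → ℝ) × (Fin n → Y) =>
        ∏ j, ENNReal.ofReal (locDens φ n p.1 (p.2 j)) := by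
      refine Finset.measurable_prod _ fun j _ => ?_
      have : Measurable fun p : (Fin k → ℝ) × (Fin n → Y) => (p.1, p.2 j) :=
        measurable_fst.prodMk ((measurable_pi_apply j).comp measurable_snd)
      exact (hdm2.comp this).ennreal_ofReal
    have h2 : Measurable fun p : (Fin k → ℝ) × (Fin n → Y) =>
        ENNReal.ofReal (|est p.2 i - locPt k n p.1 i| ^ u) := by
      have a : Measurable fun p : (Fin k → ℝ) × (Fin n → Y) => est p.2 i := (hesti i).comp measurable_snd
      have b : Measurable fun p : (Fin k → ℝ) × (Fin n → Y) => locPt k n p.1 i :=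
        (hptm i).comp measurable_fst
      have c := a.sub b
      exact ((by fun_prop : Measurable fun z : ℝ => ENNReal.ofReal (|z| ^ u))).comp c
    exact (h1.mul h2).lintegral_prod_right'
  have hlm : ∀ t i, Measurable fun y => ENNReal.ofReal (|est y i - locPt k n t i| ^ u) := by
    intro t i
    have := hesti i
    fun_prop
  have hpi : ∀ t : Fin k → ℝ, (∀ i, |t i| ≤ D) →
      Measure.pi (fun _ : Fin n => μ.withDensity fun y => ENNReal.ofReal (locDens φ n t y))
        = (Measure.pi fun _ : Fin n => μ).withDensity
          fun y => ∏ j, ENNReal.ofReal (locDens φ n t (y j)) := by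
    intro t ht
    have := isProb_locDens (n := n) hφm hφ hφ0 hsmall ht
    exact pi_withDensity _ _ (hdm t)
  have hFpi : ∀ t : Fin k → ℝ, (∀ i, |t i| ≤ D) → ∀ i, F i t
      = ∫⁻ y, ENNReal.ofReal (|est y i - locPt k n t i| ^ u)
        ∂(Measure.pi fun _ : Fin n => μ.withDensity fun y => ENNReal.ofReal (locDens φ n t y)) := by
    intro t ht i
    have hprod : Measurable fun y : Fin n → Y => ∏ j, ENNReal.ofReal (locDens φ n t (y j)) :=
      Finset.measurable_prod _ fun j _ => (hdm t).comp (measurable_pi_apply j)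
    rw [hpi t ht, lintegral_withDensity_eq_lintegral_mul _ hprod (hlm t i)]
    rfl
  have hrisk : ∀ t : Fin k → ℝ, (∀ i, |t i| ≤ D) → ∑ i, F i t ≤ risk k n u Q est := by
    intro t ht
    have hmem := locPt_mem hk ht hsimp
    refine le_trans (le_of_eq ?_) (le_iSup₂_of_le (locPt k n t) hmem le_rfl)
    rw [marginal_eq hfm hf0 hQ hmem.1]
    simp_rw [locDens_eq hk f hfs t]
    simp_rw [fun y => ENNReal.ofReal_sum_of_nonneg (s := Finset.univ)
      (f := fun i => |est y i - locPt k n t i| ^ u) fun i _ => by positivity]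
    rw [lintegral_finsetSum _ fun i _ => hlm t i]
    exact Finset.sum_congr rfl fun i _ => hFpi t ht i
  have hcoord : ∀ i, ENNReal.ofReal (b ^ u * X i) ≤ ∫⁻ t, F i t ∂(Measure.pi ν) := by
    intro i
    rw [lintegral_pi_resample ν (hFm i) i]
    calc ENNReal.ofReal (b ^ u * X i) = ∫⁻ _, ENNReal.ofReal (b ^ u * X i) ∂(Measure.pi ν) := by simp
      _ ≤ _ := lintegral_mono_ae ?_
    filter_upwards [hbox] with x hx
    -- `pᵢ = a + b s` as a function of the `i`-th parameter `s`
    set a := 1 / (k:ℝ) - ((∑ j, x j) - x i) / k / √n with ha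
    have hp : ∀ s, locPt k n (Function.update x i s) i = a + b * s := by
      intro s
      have e : ∑ j, Function.update x i s j = s + ((∑ j, x j) - x i) := by
        rw [Finset.sum_update_of_mem (Finset.mem_univ i), ← Finset.sum_sdiff
          (Finset.subset_univ {i})]
        simp
      unfold locPt
      rw [e, Function.update_self, ha, hb]
      field_simp
      ring
    have hc := coord_bound (u := u) hφm hφ hE hφ0 hD hsmall hη i (H i) hx
      (fun y => (est y i - a) / b) (((hesti i).sub_const _).div_const _)
    rw [ENNReal.ofReal_mul (by positivity)]
    refine (mul_le_mul_right hc _).trans ?_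
    rw [← lintegral_const_mul' _ _ ENNReal.ofReal_ne_top]
    have hs : ∀ᵐ s ∂(ν i), |s| ≤ D := by
      rw [ae_iff]
      refine measure_mono_null (fun s hs => ?_) (hν i)
      intro hs'
      exact hs (abs_le.2 hs')
    refine lintegral_mono_ae ?_
    filter_upwards [hs] with s hs1
    have hxs : ∀ j, |Function.update x i s j| ≤ D := by
      intro j
      by_cases hj : j = i
      · subst hj; simpa using hs1
      · rw [Function.update_of_ne hj]; exact hx j
    rw [hFpi _ hxs, ← lintegral_const_mul' _ _ ENNReal.ofReal_ne_top]
    refine lintegral_mono fun y => le_of_eq ?_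
    rw [← ENNReal.ofReal_mul (by positivity), hp, ← Real.mul_rpow hbp.le (abs_nonneg _)]
    congr 2
    rw [← abs_of_pos hbp, ← abs_mul, abs_of_pos hbp]
    congr 1
    field_simp
    ring
  calc ENNReal.ofReal (b ^ u * ∑ i, X i) ≤ ∑ i, ENNReal.ofReal (b ^ u * X i) := by
        rw [Finset.mul_sum]
        exact Finset.le_sum_of_subadditive ENNReal.ofReal ENNReal.ofReal_zero.le
          (fun _ _ => ENNReal.ofReal_add_le) _ _
    _ ≤ ∑ i, ∫⁻ t, F i t ∂(Measure.pi ν) := Finset.sum_le_sum fun i _ => hcoord i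
    _ = ∫⁻ t, ∑ i, F i t ∂(Measure.pi ν) := (lintegral_finsetSum _ fun i _ => hFm i).symm
    _ ≤ ∫⁻ _, risk k n u Q est ∂(Measure.pi ν) := by
        refine lintegral_mono_ae ?_
        filter_upwards [hbox] with t ht using hrisk t ht
    _ = risk k n u Q est := by simp

/-! ### The lower bound -/

/-- The asymptotic lower bound on the minimax risk of a private mechanism: it follows from the
coordinatewise Bayes bound, the information budget and Jensen's inequality. -/
lemma minimax_lower {Y : Type} [MeasurableSpace Y] {k : ℕ} (hk : 2 ≤ k) {ε u : ℝ}
    (hε : 0 < ε) (hu1 : 1 ≤ u) (hu2 : u ≤ 2) {dstar : ℕ} (hd : IsOptDstar k ε dstar)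
    (Q : Kernel (Fin k) Y) (hQ : IsPrivate ε Q) {η : ℝ} (hη : 0 < η) :
    ∀ᶠ n : ℕ in atTop,
      ENNReal.ofReal ((1 / √n) ^ u * (k * Cmom u * Mconst k ε dstar ^ (u / 2) - η))
        ≤ minimaxRisk k n u Q := by
  have hdm := Finset.mem_Icc.1 hd.1
  have hBpos := infoBudget_pos hε hdm.1 hdm.2
  have hgpos := gfun_pos (ε := ε) hdm.1 hdm.2
  set B := infoBudget k ε dstar with hB
  have hk0 : (0:ℝ) < k := by positivity
  have hk1 : (1:ℝ) / k < 1 := by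
    rw [div_lt_one hk0]; exact_mod_cast (by omega : 1 < k)
  have hkk : 0 < 1 - 1 / (k:ℝ) := by linarith
  have hCm := Cmom_pos hu1 hu2
  obtain ⟨μ, f, hμ, hfm, hf0, hfe, hfs, hQf⟩ := exists_density hk Q hQ
  set E := Real.exp ε with hE
  have hE1 : 1 ≤ E := Real.one_le_exp hε.le
  have hfE : ∀ i y, f i y ≤ E := by
    intro i y
    have h1 : ∑ _j : Fin k, f i y ≤ ∑ j, E * f j y := Finset.sum_le_sum fun j _ => hfe y i j
    rw [← Finset.mul_sum, hfs] at h1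
    simp only [Finset.sum_const, Finset.card_univ, Fintype.card_fin, nsmul_eq_mul] at h1
    rw [mul_comm] at h1
    exact le_of_mul_le_mul_right h1 hk0
  have hφ : ∀ i y, |f i y - 1| ≤ E := fun i y =>
    abs_le.2 ⟨by linarith [hf0 y i], by linarith [hfE i y]⟩
  have hfi : ∀ i, Integrable (f i) μ := fun i =>
    integrable_of_abs_le (C := E) (hfm i) fun y => by
      rw [abs_of_nonneg (hf0 y i)]; exact hfE i y
  have hφ0 : ∀ i, ∫ y, (f i y - 1) ∂μ = 0 := by
    intro i
    have hM := hQ.1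
    have h1 : Q i Set.univ = 1 := measure_univ
    rw [hQf i, withDensity_apply _ MeasurableSet.univ, Measure.restrict_univ,
      ← ofReal_integral_eq_lintegral_ofReal (hfi i) (Eventually.of_forall fun y => hf0 y i),
      ENNReal.ofReal_eq_one] at h1
    rw [integral_sub (hfi i) (integrable_const _), h1]
    simp
  have hφsq : ∀ i, Integrable (fun y => (f i y - 1) ^ 2) μ := fun i =>
    integrable_of_abs_le (C := E ^ 2) (by have := hfm i; fun_prop) fun y => by
      rw [abs_pow]; exact pow_le_pow_left₀ (abs_nonneg _) (hφ i y) 2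
  set I : Fin k → ℝ := fun i => ∫ y, (f i y - 1) ^ 2 ∂μ with hI
  have hI0 : ∀ i, 0 ≤ I i := fun i => integral_nonneg fun y => sq_nonneg _
  have hIsum : ∑ i, I i ≤ k * B := by
    rw [hI, ← integral_finsetSum _ fun i _ => hφsq i]
    calc ∫ y, ∑ i, (f i y - 1) ^ 2 ∂μ ≤ ∫ _, k * B ∂μ :=
          integral_mono (integrable_finsetSum _ fun i _ => hφsq i) (integrable_const _) fun y =>
            sum_sq_dev_le hk hε hd (fun i => f i y) (fun i j => hfe y i j) (hfs y)
      _ = k * B := by simp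
  -- the slack in the information, chosen by continuity
  obtain ⟨h, hh0, hh⟩ : ∃ h : ℝ, 0 < h ∧ k * Cmom u * Mconst k ε dstar ^ (u / 2) - η
      ≤ (1 - 1 / (k:ℝ)) ^ u * (k * (Cmom u * (B + h) ^ (-(u / 2)) - h)) := by
    have hM : Mconst k ε dstar = (1 - 1 / (k:ℝ)) ^ 2 * B⁻¹ := by
      have : Real.exp ε - 1 ≠ 0 := by
        have := Real.add_one_lt_exp hε.ne'
        linarith
      rw [hB, infoBudget, Mconst]
      field_simp
    have hM2 : Mconst k ε dstar ^ (u / 2) = (1 - 1 / (k:ℝ)) ^ u * B ^ (-(u / 2)) := by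
      rw [hM, Real.mul_rpow (by positivity) (by positivity), ← Real.rpow_natCast,
        ← Real.rpow_mul hkk.le, Real.inv_rpow hBpos.le, ← Real.rpow_neg hBpos.le]
      congr 2
      push_cast
      ring
    have hcont : ContinuousAt (fun h : ℝ =>
        (1 - 1 / (k:ℝ)) ^ u * (k * (Cmom u * (B + h) ^ (-(u / 2)) - h))) 0 := by
      have h1 : ContinuousAt (fun h : ℝ => (B + h) ^ (-(u / 2))) 0 :=
        ContinuousAt.rpow_const (by fun_prop) (Or.inl (by simpa using hBpos.ne'))
      fun_prop
    have hev := (hcont.tendsto.mono_left (nhdsWithin_le_nhds (s := Set.Ioi 0))).eventually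
      (le_mem_nhds (a := k * Cmom u * Mconst k ε dstar ^ (u / 2) - η) (by
        simp only [add_zero, sub_zero]
        rw [hM2]
        have e : (k:ℝ) * Cmom u * ((1 - 1 / (k:ℝ)) ^ u * B ^ (-(u / 2)))
          = (1 - 1 / (k:ℝ)) ^ u * (k * (Cmom u * B ^ (-(u / 2)))) := by ring
        rw [e]
        linarith))
    obtain ⟨h, h1, h2⟩ := (hev.and self_mem_nhdsWithin).exists
    exact ⟨h, h2, h1⟩
  choose D hD ν hνp hν N hN using fun i => oneD (u := u) (C := 2 * E) (J := I i + h) (η := h) hu1 hu2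
    (by positivity) (by linarith [hI0 i]) hh0
  set D' := 1 + ∑ i, D i with hD'
  have hDle : ∀ i, D i ≤ D' := fun i => by
    have := Finset.single_le_sum (f := D) (fun j _ => (hD j).le) (Finset.mem_univ i)
    linarith
  have hD'p : 0 < D' := by
    have : 0 ≤ ∑ i, D i := Finset.sum_nonneg fun i _ => (hD i).le
    linarith
  have hν' : ∀ i, ν i (Set.Icc (-D') D')ᶜ = 0 := fun i =>
    measure_mono_null (Set.compl_subset_compl.2
      (Set.Icc_subset_Icc (by linarith [hDle i]) (hDle i))) (hν i)
  have hsq : Tendsto (fun n : ℕ => √(n:ℝ)) atTop atTop :=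
    Real.tendsto_sqrt_atTop.comp tendsto_natCast_atTop_atTop
  have ev1 : ∀ᶠ n : ℕ in atTop, k * D' * E / √(n:ℝ) ≤ 1 / 2 :=
    (hsq.const_div_atTop _).eventually (ge_mem_nhds (by norm_num))
  have ev2 : ∀ᶠ n : ℕ in atTop, 2 * (k * D' * E / √(n:ℝ)) * E ^ 2 ≤ h := by
    refine (((hsq.const_div_atTop (k * D' * E)).const_mul 2).mul_const (E ^ 2)).eventually
      (ge_mem_nhds ?_)
    simpa using hh0
  have ev3 : ∀ᶠ n : ℕ in atTop, 2 * D' / √(n:ℝ) ≤ 1 / k :=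
    (hsq.const_div_atTop _).eventually (ge_mem_nhds (by positivity))
  have ev4 : ∀ᶠ n : ℕ in atTop, ∀ i, N i ≤ n := eventually_all.2 fun i => eventually_ge_atTop (N i)
  filter_upwards [ev1, ev2, ev3, ev4, eventually_gt_atTop 0] with n e1 e2 e3 e4 hn
  refine le_iInf₂ fun est hest => ?_
  refine le_trans (ENNReal.ofReal_le_ofReal ?_) (risk_ge_sum hk hn hfm hf0 hfs hQf hφ
    (by linarith) hφ0 hD'p e1 e2 e3 (fun i => Cmom u * (I i + h) ^ (-(u / 2)) - h) ν hν'
    (fun i P _ r h1 h2 h3 h4 est hest => hN i n (e4 i) Y P r h1 h2 h3 h4 est hest) est hest)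
  have hJ := sum_rpow_neg_ge (v := u / 2) (c := B + h) (by linarith) (by linarith)
    (fun i => I i + h) (fun i => by linarith [hI0 i])
    (by rw [Finset.sum_add_distrib]
        simp only [Finset.sum_const, Finset.card_univ, Fintype.card_fin, nsmul_eq_mul]
        linarith)
  have hX : k * (Cmom u * (B + h) ^ (-(u / 2)) - h)
      ≤ ∑ i, (Cmom u * (I i + h) ^ (-(u / 2)) - h) := by
    rw [Finset.sum_sub_distrib, ← Finset.mul_sum]
    simp only [Finset.sum_const, Finset.card_univ, Fintype.card_fin, nsmul_eq_mul]
    nlinarith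
  rw [Real.div_rpow hkk.le (Real.sqrt_nonneg _), Real.div_rpow zero_le_one (Real.sqrt_nonneg _),
    Real.one_rpow, div_mul_eq_mul_div, div_mul_eq_mul_div, one_mul]
  refine div_le_div_of_nonneg_right (hh.trans ?_) (by positivity)
  exact mul_le_mul_of_nonneg_left hX (by positivity)

/-! ### Lindeberg's replacement argument -/

/-- Second-order Taylor expansion for a function with Lipschitz second derivative. -/
lemma taylor_two {f f1 f2 : ℝ → ℝ} (h1 : ∀ x, HasDerivAt f (f1 x) x)
    (h2 : ∀ x, HasDerivAt f1 (f2 x) x) {L : ℝ} (hL : ∀ x y, |f2 x - f2 y| ≤ L * |x - y|) (x h : ℝ) :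
    |f (x + h) - f x - f1 x * h - f2 x * h ^ 2 / 2| ≤ L * |h| ^ 3 := by
  have hL0 : 0 ≤ L := by
    have := (abs_nonneg _).trans (hL 1 0)
    simpa using this
  have hle : ∀ t ∈ segment ℝ 0 h, |t| ≤ |h| := by
    intro t ht
    rw [segment_eq_image] at ht
    obtain ⟨θ, hθ, rfl⟩ := ht
    simp only [smul_eq_mul, mul_zero, zero_add]
    rw [abs_mul, abs_of_nonneg hθ.1]
    exact mul_le_of_le_one_left (abs_nonneg _) hθ.2
  have hconv : Convex ℝ (segment ℝ (0:ℝ) h) := convex_segment _ _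
  have hd1 : ∀ t ∈ segment ℝ 0 h, |f1 (x + t) - f1 x - f2 x * t| ≤ L * |h| * |h| := by
    intro t ht
    have hder : ∀ s, HasDerivAt (fun t => f1 (x + t) - f1 x - f2 x * t) (f2 (x + s) - f2 x) s := by
      intro s
      have a := ((h2 (x + s)).comp_const_add x s).sub_const (f1 x)
      have b := (hasDerivAt_id s).const_mul (f2 x)
      exact (a.sub b).congr_deriv (by simp)
    have := hconv.norm_image_sub_le_of_norm_hasDerivWithin_le (C := L * |h|)
      (fun s _ => (hder s).hasDerivWithinAt) (fun s hs => by
        rw [Real.norm_eq_abs]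
        refine (hL _ _).trans ?_
        rw [add_sub_cancel_left]
        exact mul_le_mul_of_nonneg_left (hle s hs) hL0) (left_mem_segment ℝ 0 h) ht
    simp only [add_zero, sub_self, mul_zero, sub_zero, Real.norm_eq_abs] at this
    exact this.trans (mul_le_mul_of_nonneg_left (hle t ht) (by positivity))
  have hder : ∀ s, HasDerivAt (fun t => f (x + t) - f x - f1 x * t - f2 x * t ^ 2 / 2)
      (f1 (x + s) - f1 x - f2 x * s) s := by
    intro s
    have a := ((h1 (x + s)).comp_const_add x s).sub_const (f x)
    have b := (hasDerivAt_id s).const_mul (f1 x)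
    have c := ((hasDerivAt_pow 2 s).const_mul (f2 x)).div_const 2
    have d := (a.sub b).sub c
    exact d.congr_deriv (by simp; ring)
  have := hconv.norm_image_sub_le_of_norm_hasDerivWithin_le (C := L * |h| * |h|)
    (fun s _ => (hder s).hasDerivWithinAt) (fun s hs => hd1 s hs) (left_mem_segment ℝ 0 h)
    (right_mem_segment ℝ 0 h)
  simp only [add_zero, sub_self, mul_zero, sub_zero, Real.norm_eq_abs] at this
  have e0 : (0:ℝ) ^ 2 = 0 := by norm_num
  rw [e0] at this
  simp only [mul_zero, zero_div, sub_zero] at this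
  calc _ ≤ L * |h| * |h| * |h| := this
    _ = _ := by ring

/-- A smooth majorant of `|x| ^ u`; `δ` is the width of the smoothing around `0`. -/
noncomputable def smoothAbs (u δ x : ℝ) : ℝ := (x ^ 2 + δ ^ 2) ^ (u / 2)

lemma abs_rpow_le_smoothAbs {u δ : ℝ} (hu : 1 ≤ u) (x : ℝ) : |x| ^ u ≤ smoothAbs u δ x := by
  unfold smoothAbs
  have : |x| ^ u = (x ^ 2) ^ (u / 2) := by
    rw [← sq_abs, ← Real.rpow_natCast, ← Real.rpow_mul (abs_nonneg _)]
    congr 1; push_cast; ring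
  rw [this]
  exact Real.rpow_le_rpow (sq_nonneg _) (by nlinarith [sq_nonneg δ]) (by linarith)

lemma smoothAbs_le {u δ : ℝ} (hδ : 0 < δ) (hu1 : 1 ≤ u) (hu2 : u ≤ 2) (x : ℝ) :
    smoothAbs u δ x ≤ |x| ^ u + δ ^ u := by
  unfold smoothAbs
  have e : ∀ y : ℝ, |y| ^ u = (y ^ 2) ^ (u / 2) := fun y => by
    rw [← sq_abs, ← Real.rpow_natCast, ← Real.rpow_mul (abs_nonneg _)]
    congr 1; push_cast; ring
  rw [e x, ← abs_of_pos hδ, e δ, abs_of_pos hδ]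
  exact Real.rpow_add_le_add_rpow (sq_nonneg _) (sq_nonneg _) (by linarith) (by linarith)

/-- The majorant is smooth enough for Lindeberg's argument. -/
lemma smoothAbs_taylor {u δ : ℝ} (hδ : 0 < δ) (hu1 : 1 ≤ u) (hu2 : u ≤ 2) :
    ∃ (f1 f2 : ℝ → ℝ) (L : ℝ), 0 ≤ L ∧ ∀ x h,
      |smoothAbs u δ (x + h) - smoothAbs u δ x - f1 x * h - f2 x * h ^ 2 / 2| ≤ L * |h| ^ 3 := by
  have hw : ∀ x : ℝ, 0 < x ^ 2 + δ ^ 2 := fun x => by positivity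
  have hpow : ∀ (a x : ℝ), HasDerivAt (fun x : ℝ => (x ^ 2 + δ ^ 2) ^ a)
      (2 * x * a * (x ^ 2 + δ ^ 2) ^ (a - 1)) x := by
    intro a x
    have h := ((hasDerivAt_pow 2 x).add_const (δ ^ 2)).rpow_const (p := a) (Or.inl (hw x).ne')
    simpa using h
  set f1 : ℝ → ℝ := fun x => u * x * (x ^ 2 + δ ^ 2) ^ (u / 2 - 1) with hf1
  set f2 : ℝ → ℝ := fun x => u * (x ^ 2 + δ ^ 2) ^ (u / 2 - 1)
    + u * (u - 2) * x ^ 2 * (x ^ 2 + δ ^ 2) ^ (u / 2 - 2) with hf2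
  set f3 : ℝ → ℝ := fun x => 3 * u * (u - 2) * (x * (x ^ 2 + δ ^ 2) ^ (u / 2 - 2))
    + u * (u - 2) * (u - 4) * (x ^ 3 * (x ^ 2 + δ ^ 2) ^ (u / 2 - 3)) with hf3
  have h1 : ∀ x, HasDerivAt (smoothAbs u δ) (f1 x) x := by
    intro x
    exact (hpow (u / 2) x).congr_deriv (by simp only [hf1]; ring)
  have h2 : ∀ x, HasDerivAt f1 (f2 x) x := by
    intro x
    have h := ((hasDerivAt_id x).const_mul u).mul (hpow (u / 2 - 1) x)
    refine h.congr_deriv ?_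
    simp only [hf2, id]
    rw [show u / 2 - 1 - 1 = u / 2 - 2 by ring]
    ring
  have h3 : ∀ x, HasDerivAt f2 (f3 x) x := by
    intro x
    have a := (hpow (u / 2 - 1) x).const_mul u
    have b := ((hasDerivAt_pow 2 x).const_mul (u * (u - 2))).mul (hpow (u / 2 - 2) x)
    refine (a.add b).congr_deriv ?_
    simp only [hf3]
    rw [show u / 2 - 1 - 1 = u / 2 - 2 by ring, show u / 2 - 2 - 1 = u / 2 - 3 by ring]
    push_cast
    ring
  set Λ := (δ ^ 2) ^ (u / 2 - 3 / 2) with hΛ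
  have hΛ0 : 0 ≤ Λ := by positivity
  have hb : ∀ x : ℝ, ∀ m : ℕ, |x| ^ m * (x ^ 2 + δ ^ 2) ^ (u / 2 - 3 / 2 - m / 2) ≤ Λ := by
    intro x m
    have a : |x| ^ m ≤ (x ^ 2 + δ ^ 2) ^ ((m:ℝ) / 2) := by
      have : |x| ≤ (x ^ 2 + δ ^ 2) ^ ((1:ℝ) / 2) := by
        rw [← Real.sqrt_eq_rpow]
        exact Real.abs_le_sqrt (by nlinarith [sq_nonneg δ])
      calc |x| ^ m ≤ ((x ^ 2 + δ ^ 2) ^ ((1:ℝ) / 2)) ^ m := pow_le_pow_left₀ (abs_nonneg _) this m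
        _ = _ := by rw [← Real.rpow_natCast, ← Real.rpow_mul (hw x).le]; congr 1; ring
    calc |x| ^ m * (x ^ 2 + δ ^ 2) ^ (u / 2 - 3 / 2 - m / 2)
        ≤ (x ^ 2 + δ ^ 2) ^ ((m:ℝ) / 2) * (x ^ 2 + δ ^ 2) ^ (u / 2 - 3 / 2 - m / 2) := by
          gcongr
      _ = (x ^ 2 + δ ^ 2) ^ (u / 2 - 3 / 2) := by
          rw [← Real.rpow_add (hw x)]; congr 1; ring
      _ ≤ Λ := Real.rpow_le_rpow_of_nonpos (by positivity) (by nlinarith [sq_nonneg x])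
          (by linarith)
  have hf3b : ∀ x, ‖f3 x‖ ≤ 12 * Λ := by
    intro x
    have a := hb x 1
    have b := hb x 3
    rw [show u / 2 - 3 / 2 - ((1:ℕ):ℝ) / 2 = u / 2 - 2 by push_cast; ring, pow_one] at a
    rw [show u / 2 - 3 / 2 - ((3:ℕ):ℝ) / 2 = u / 2 - 3 by push_cast; ring] at b
    rw [Real.norm_eq_abs, hf3]
    refine (abs_add_le _ _).trans ?_
    rw [abs_mul _ (x * _), abs_mul _ (x ^ 3 * _), abs_mul x, abs_mul (x ^ 3), abs_pow,
      abs_of_pos (Real.rpow_pos_of_pos (hw x) _), abs_of_pos (Real.rpow_pos_of_pos (hw x) _)]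
    have c1 : |3 * u * (u - 2)| ≤ 6 := by rw [abs_le]; constructor <;> nlinarith
    have c2 : |u * (u - 2) * (u - 4)| ≤ 6 := by
      rw [abs_mul]
      have d1 : |u * (u - 2)| ≤ 2 := by rw [abs_le]; constructor <;> nlinarith
      have d2 : |u - 4| ≤ 3 := by rw [abs_le]; constructor <;> linarith
      calc _ ≤ 2 * 3 := mul_le_mul d1 d2 (abs_nonneg _) (by norm_num)
        _ = 6 := by norm_num
    have e1 := mul_le_mul c1 a (by have := hw x; positivity) (by norm_num)
    have e2 := mul_le_mul c2 b (by have := hw x; positivity) (by norm_num)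
    linarith
  have hL : ∀ x y, |f2 x - f2 y| ≤ 12 * Λ * |x - y| := fun x y => by
    simpa using convex_univ.norm_image_sub_le_of_norm_hasDerivWithin_le
      (fun s _ => (h3 s).hasDerivWithinAt) (fun s _ => hf3b s) (Set.mem_univ y) (Set.mem_univ x)
  exact ⟨f1, f2, 12 * Λ, by positivity, taylor_two h1 h2 hL⟩

/-- Replacing a centred increment by its variance in the second-order expansion. -/
lemma taylor_expect {Ω : Type*} [MeasurableSpace Ω] {μ : Measure Ω} [IsProbabilityMeasure μ]
    {f f1 f2 : ℝ → ℝ} {L : ℝ} (hf : Measurable f)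
    (hT : ∀ x h, |f (x + h) - f x - f1 x * h - f2 x * h ^ 2 / 2| ≤ L * |h| ^ 3)
    {ξ : Ω → ℝ} (hm : Measurable ξ) (hξ : MemLp ξ 3 μ) (h0 : ∫ ω, ξ ω ∂μ = 0) (x : ℝ) :
    Integrable (fun ω => f (x + ξ ω)) μ ∧
      |∫ ω, f (x + ξ ω) ∂μ - (f x + f2 x / 2 * ∫ ω, ξ ω ^ 2 ∂μ)| ≤ L * ∫ ω, |ξ ω| ^ 3 ∂μ := by
  have i1 : Integrable ξ μ := hξ.integrable (by norm_num)
  have i2 : Integrable (fun ω => ξ ω ^ 2) μ :=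
    (hξ.mono_exponent (by norm_num : (2:ℝ≥0∞) ≤ 3)).integrable_sq
  have i3 : Integrable (fun ω => |ξ ω| ^ 3) μ := by
    have h : MemLp ξ ((3:ℕ) : ℝ≥0∞) μ := by exact_mod_cast hξ
    exact h.integrable_norm_pow (by norm_num)
  set R : Ω → ℝ := fun ω => f (x + ξ ω) - f x - f1 x * ξ ω - f2 x * ξ ω ^ 2 / 2 with hR
  have hRm : Measurable R := by
    have : Measurable fun ω => f (x + ξ ω) := hf.comp (measurable_const.add hm)
    fun_prop
  have hRb : ∀ ω, ‖R ω‖ ≤ L * |ξ ω| ^ 3 := fun ω => by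
    rw [Real.norm_eq_abs, hR]
    exact hT x (ξ ω)
  have iR : Integrable R μ :=
    (i3.const_mul L).mono' hRm.aestronglyMeasurable (Eventually.of_forall hRb)
  have hP : Integrable (fun ω => f x + f1 x * ξ ω + f2 x / 2 * ξ ω ^ 2) μ :=
    ((integrable_const _).add (i1.const_mul _)).add (i2.const_mul _)
  have hsplit : (fun ω => f (x + ξ ω))
      = fun ω => (f x + f1 x * ξ ω + f2 x / 2 * ξ ω ^ 2) + R ω := by
    funext ω; simp only [hR]; ring
  have hPi : ∫ ω, (f x + f1 x * ξ ω + f2 x / 2 * ξ ω ^ 2) ∂μ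
      = f x + f2 x / 2 * ∫ ω, ξ ω ^ 2 ∂μ := by
    have hA : Integrable (fun ω => f x + f1 x * ξ ω) μ :=
      (integrable_const _).add (i1.const_mul _)
    rw [integral_add hA (i2.const_mul _), integral_add (integrable_const _) (i1.const_mul _), integral_const_mul, integral_const_mul, h0]
    simp
  rw [hsplit]
  refine ⟨hP.add iR, ?_⟩
  rw [integral_add hP iR, hPi, add_sub_cancel_left, ← integral_const_mul]
  exact norm_integral_le_of_norm_le (i3.const_mul L) (Eventually.of_forall hRb)

/-- Lindeberg's comparison of two centred increments with the same variance. -/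
lemma lindeberg_step {Ω : Type*} [MeasurableSpace Ω] {μ : Measure Ω} [IsProbabilityMeasure μ]
    {γ : Measure ℝ} [IsProbabilityMeasure γ]
    {f f1 f2 : ℝ → ℝ} {L : ℝ} (hf : Measurable f) (hf0 : ∀ x, 0 ≤ f x)
    (hT : ∀ x h, |f (x + h) - f x - f1 x * h - f2 x * h ^ 2 / 2| ≤ L * |h| ^ 3)
    {ξ : Ω → ℝ} (hm : Measurable ξ) (hξ : MemLp ξ 3 μ) (h0 : ∫ ω, ξ ω ∂μ = 0)
    (hγ : MemLp id 3 γ) (hγ0 : ∫ z, z ∂γ = 0) (hvar : ∫ ω, ξ ω ^ 2 ∂μ = ∫ z, z ^ 2 ∂γ) (x : ℝ) :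
    ∫⁻ ω, ENNReal.ofReal (f (x + ξ ω)) ∂μ ≤ ∫⁻ z, ENNReal.ofReal (f (x + z)) ∂γ
      + ENNReal.ofReal (L * ∫ ω, |ξ ω| ^ 3 ∂μ + L * ∫ z, |z| ^ 3 ∂γ) := by
  obtain ⟨a1, a2⟩ := taylor_expect hf hT hm hξ h0 x
  obtain ⟨b1, b2⟩ := taylor_expect hf hT measurable_id hγ hγ0 x
  simp only [id] at b1 b2
  rw [← ofReal_integral_eq_lintegral_ofReal a1 (Eventually.of_forall fun _ => hf0 _),
    ← ofReal_integral_eq_lintegral_ofReal b1 (Eventually.of_forall fun _ => hf0 _)]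
  refine le_trans (ENNReal.ofReal_le_ofReal ?_) ENNReal.ofReal_add_le
  rw [hvar] at a2
  rw [abs_le] at a2 b2
  linarith [a2.1, a2.2, b2.1, b2.2]

/-- Replacing the increments of a sum of independent variables by Gaussian ones, one at a time. -/
lemma lindeberg_pi {Y : Type} [MeasurableSpace Y] (P : Measure Y) [IsProbabilityMeasure P]
    {ξ : Y → ℝ} (hξ : Measurable ξ) (v : ℝ≥0) {F : ℝ → ℝ≥0∞} (hF : Measurable F) (c : ℝ≥0∞)
    (hstep : ∀ x, ∫⁻ y, F (x + ξ y) ∂P ≤ ∫⁻ z, F (x + z) ∂(gaussianReal 0 v) + c) (n : ℕ) (x : ℝ) :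
    ∫⁻ y, F (x + ∑ j, ξ (y j)) ∂(Measure.pi fun _ : Fin n => P)
      ≤ ∫⁻ z, F (x + z) ∂(gaussianReal 0 (n * v)) + n * c := by
  induction n generalizing x with
  | zero => simp [gaussianReal_zero_var, lintegral_dirac]
  | succ n ih =>
    have hsum : ∀ n : ℕ, Measurable fun y : Fin n → Y => ∑ j, ξ (y j) := fun n =>
      Finset.measurable_sum _ fun j _ => hξ.comp (measurable_pi_apply j)
    have hpre := (measurePreserving_piFinSuccAbove (fun _ : Fin (n + 1) => P) 0).symm
    rw [← hpre.lintegral_comp_emb (MeasurableEquiv.measurableEmbedding _)]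
    simp_rw [Fin.sum_univ_succ, MeasurableEquiv.piFinSuccAbove_symm_apply, Fin.insertNthEquiv]
    simp only [Equiv.coe_fn_mk, Fin.insertNth_zero', Fin.cons_zero, Fin.cons_succ]
    rw [lintegral_prod _ (by
      refine (hF.comp (measurable_const.add ?_)).aemeasurable
      exact (hξ.comp measurable_fst).add ((hsum n).comp measurable_snd))]
    calc ∫⁻ y₀, ∫⁻ y, F (x + (ξ y₀ + ∑ j, ξ (y j))) ∂(Measure.pi fun _ : Fin n => P) ∂P
        ≤ ∫⁻ y₀, (∫⁻ z, F (x + ξ y₀ + z) ∂(gaussianReal 0 (n * v)) + n * c) ∂P := by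
          refine lintegral_mono fun y₀ => ?_
          simp_rw [← add_assoc]
          exact ih (x + ξ y₀)
      _ = ∫⁻ z, ∫⁻ y₀, F (x + z + ξ y₀) ∂P ∂(gaussianReal 0 (n * v)) + n * c := by
          rw [lintegral_add_right _ measurable_const, lintegral_const, measure_univ, mul_one]
          congr 1
          rw [lintegral_lintegral_swap]
          · simp_rw [add_right_comm x]
          · refine (hF.comp ?_).aemeasurable
            exact ((measurable_const.add (hξ.comp measurable_fst)).add measurable_snd)
      _ ≤ ∫⁻ z, (∫⁻ w, F (x + z + w) ∂(gaussianReal 0 v) + c) ∂(gaussianReal 0 (n * v))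
            + n * c := by
          gcongr with z
          exact hstep (x + z)
      _ = ∫⁻ z, ∫⁻ w, F (x + (z + w)) ∂(gaussianReal 0 v) ∂(gaussianReal 0 (n * v))
            + (n + 1) * c := by
          rw [lintegral_add_right _ measurable_const, lintegral_const, measure_univ, mul_one,
            add_assoc]
          simp_rw [add_assoc]
          congr 1
          rw [add_mul, one_mul, add_comm]
      _ = ∫⁻ z, F (x + z) ∂(gaussianReal 0 ((n + 1 : ℕ) * v)) + (n + 1 : ℕ) * c := by
          rw [← Measure.lintegral_conv (f := fun z => F (x + z))
            (hF.comp (measurable_const.add measurable_id)), gaussianReal_conv_gaussianReal]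
          push_cast
          rw [add_zero, add_mul (n:ℝ≥0) 1 v, one_mul]

lemma gaussianReal_sq_eq_map (s : ℝ) :
    gaussianReal 0 (Real.toNNReal (s ^ 2)) = (gaussianReal 0 1).map (s * ·) := by
  rw [gaussianReal_map_const_mul, mul_zero, mul_one]
  congr 1
  ext
  simp [sq_nonneg]

/-- Absolute moments of sums of independent centred bounded variables are asymptotically at most
the Gaussian ones, with an explicit error. -/
lemma lindeberg_bound {u δ : ℝ} (hδ : 0 < δ) (hu1 : 1 ≤ u) (hu2 : u ≤ 2) :
    ∃ K : ℝ, 0 ≤ K ∧ ∀ {Y : Type} [MeasurableSpace Y] (P : Measure Y) [IsProbabilityMeasure P]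
      {ξ : Y → ℝ} (_ : Measurable ξ) {b s : ℝ} (_ : ∀ y, |ξ y| ≤ b) (_ : ∫ y, ξ y ∂P = 0)
      (_ : 0 ≤ s) (_ : ∫ y, ξ y ^ 2 ∂P = s ^ 2) (n : ℕ),
      ∫⁻ y, ENNReal.ofReal (|∑ j, ξ (y j)| ^ u) ∂(Measure.pi fun _ : Fin n => P)
        ≤ ENNReal.ofReal ((√n * s) ^ u * Cmom u + δ ^ u + n * (K * b ^ 3)) := by
  obtain ⟨f1, f2, L, hL, hT⟩ := smoothAbs_taylor hδ hu1 hu2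
  set m3 : ℝ := ∫ z, |z| ^ 3 ∂(gaussianReal 0 1) with hm3
  have hm30 : 0 ≤ m3 := integral_nonneg fun z => by positivity
  have hfm : Measurable (smoothAbs u δ) := by unfold smoothAbs; fun_prop
  have hf0 : ∀ x, 0 ≤ smoothAbs u δ x := fun x => by unfold smoothAbs; positivity
  refine ⟨L * (1 + m3), by positivity, ?_⟩
  intro Y _ P _ ξ hξ b s hb h0 hs hvar n
  obtain ⟨y0⟩ : Nonempty Y := nonempty_of_isProbabilityMeasure P
  have hb0 : 0 ≤ b := (abs_nonneg _).trans (hb y0)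
  have hmem : ∀ p, MemLp ξ p P := fun p =>
    MemLp.of_bound hξ.aestronglyMeasurable b (Eventually.of_forall hb)
  have i2 : Integrable (fun y => ξ y ^ 2) P := (hmem 2).integrable_sq
  have i3 : Integrable (fun y => |ξ y| ^ 3) P :=
    MemLp.integrable_norm_pow (p := 3) (hmem _) (by norm_num)
  have hsb : s ≤ b := by
    refine le_of_sq_le_sq ?_ hb0
    rw [← hvar]
    calc ∫ y, ξ y ^ 2 ∂P ≤ ∫ _, b ^ 2 ∂P := integral_mono i2 (integrable_const _) fun y => by
          have := pow_le_pow_left₀ (abs_nonneg _) (hb y) 2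
          rwa [sq_abs] at this
      _ = b ^ 2 := by simp
  have hξ3 : ∫ y, |ξ y| ^ 3 ∂P ≤ b ^ 3 := by
    calc ∫ y, |ξ y| ^ 3 ∂P ≤ ∫ _, b ^ 3 ∂P := integral_mono i3 (integrable_const _) fun y =>
          pow_le_pow_left₀ (abs_nonneg _) (hb y) 3
      _ = b ^ 3 := by simp
  set v := Real.toNNReal (s ^ 2) with hv
  have hγ3 : ∫ z, |z| ^ 3 ∂(gaussianReal 0 v) ≤ b ^ 3 * m3 := by
    rw [hv, gaussianReal_sq_eq_map, integral_map (by fun_prop)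
      (Measurable.aestronglyMeasurable (by fun_prop))]
    simp_rw [abs_mul, mul_pow]
    rw [integral_const_mul, abs_of_nonneg hs]
    gcongr
  have hγ2 : ∫ z, z ^ 2 ∂(gaussianReal 0 v) = s ^ 2 := by
    have := variance_fun_id_gaussianReal (μ := 0) (v := v)
    rw [variance_of_integral_eq_zero (by fun_prop) (by simp)] at this
    rw [this, hv, Real.coe_toNNReal _ (sq_nonneg _)]
  have hstep : ∀ x, ∫⁻ y, ENNReal.ofReal (smoothAbs u δ (x + ξ y)) ∂P
      ≤ ∫⁻ z, ENNReal.ofReal (smoothAbs u δ (x + z)) ∂(gaussianReal 0 v)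
        + ENNReal.ofReal (L * (1 + m3) * b ^ 3) := by
    intro x
    refine (lindeberg_step hfm hf0 hT hξ (hmem 3) h0 (memLp_id_gaussianReal' 3 (by norm_num))
      (by simp) (hvar.trans hγ2.symm) x).trans ?_
    gcongr
    nlinarith [mul_le_mul_of_nonneg_left hξ3 hL, mul_le_mul_of_nonneg_left hγ3 hL]
  have hmain := lindeberg_pi P hξ v (F := fun x => ENNReal.ofReal (smoothAbs u δ x))
    (by fun_prop) _ hstep n 0
  simp only [zero_add] at hmain
  have hnv : (n:ℝ≥0) * v = Real.toNNReal ((√n * s) ^ 2) := by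
    rw [mul_pow, Real.sq_sqrt (Nat.cast_nonneg n), Real.toNNReal_mul (Nat.cast_nonneg n),
      Real.toNNReal_natCast]
  have hgauss : ∫⁻ z, ENNReal.ofReal (smoothAbs u δ z) ∂(gaussianReal 0 (n * v))
      ≤ ENNReal.ofReal ((√n * s) ^ u * Cmom u + δ ^ u) := by
    have hs' : 0 ≤ √n * s := by positivity
    have ii := (integrable_abs_rpow_gaussian hu1 hu2).const_mul ((√n * s) ^ u)
    rw [hnv, gaussianReal_sq_eq_map, lintegral_map (by fun_prop) (by fun_prop)]
    calc ∫⁻ z, ENNReal.ofReal (smoothAbs u δ (√n * s * z)) ∂(gaussianReal 0 1)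
        ≤ ∫⁻ z, ENNReal.ofReal ((√n * s) ^ u * |z| ^ u + δ ^ u) ∂(gaussianReal 0 1) := by
          refine lintegral_mono fun z => ENNReal.ofReal_le_ofReal ?_
          refine (smoothAbs_le hδ hu1 hu2 _).trans ?_
          rw [abs_mul, abs_of_nonneg hs', Real.mul_rpow hs' (abs_nonneg _)]
      _ = ENNReal.ofReal ((√n * s) ^ u * Cmom u + δ ^ u) := by
          have hi : Integrable (fun z : ℝ => (√n * s) ^ u * |z| ^ u + δ ^ u)
              (gaussianReal 0 1) := ii.add (integrable_const _)
          rw [← ofReal_integral_eq_lintegral_ofReal hi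
            (Eventually.of_forall fun z => by positivity), integral_add ii (integrable_const _),
            integral_const_mul, Cmom]
          simp
  calc ∫⁻ y, ENNReal.ofReal (|∑ j, ξ (y j)| ^ u) ∂(Measure.pi fun _ : Fin n => P)
      ≤ ∫⁻ y, ENNReal.ofReal (smoothAbs u δ (∑ j, ξ (y j))) ∂(Measure.pi fun _ : Fin n => P) :=
        lintegral_mono fun y => ENNReal.ofReal_le_ofReal (abs_rpow_le_smoothAbs hu1 _)
    _ ≤ _ := hmain
    _ ≤ ENNReal.ofReal ((√n * s) ^ u * Cmom u + δ ^ u)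
        + n * ENNReal.ofReal (L * (1 + m3) * b ^ 3) := by gcongr
    _ = _ := by
        have hC := (Cmom_pos hu1 hu2).le
        rw [← ENNReal.ofReal_natCast n, ← ENNReal.ofReal_mul (Nat.cast_nonneg n),
          ← ENNReal.ofReal_add (by positivity) (by positivity)]

/-! ### The subset-selection scheme -/

/-- The number of outputs avoiding a given set of symbols. -/
lemma sum_out_disjoint {k d : ℕ} (T : Finset (Fin k)) :
    ∑ y : Out k d, (if Disjoint y.1 T then (1:ℝ) else 0) = ((k - T.card).choose d : ℕ) := by
  have h := Finset.sum_subtype (p := fun S : Finset (Fin k) => S.card = d)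
    (F := Subtype.fintype _) (Finset.powersetCard d Finset.univ)
    (fun S => by simp [Finset.mem_powersetCard]) (fun S => if Disjoint S T then (1:ℝ) else 0)
  refine Eq.trans h.symm ?_
  rw [Finset.sum_ite, Finset.sum_const_zero, add_zero, Finset.sum_const, nsmul_eq_mul, mul_one]
  have hs : (Finset.powersetCard d Finset.univ).filter (fun S : Finset (Fin k) => Disjoint S T)
      = Finset.powersetCard d Tᶜ := by
    ext S
    simp only [Finset.mem_filter, Finset.mem_powersetCard, Finset.subset_univ, true_and]
    rw [← Finset.subset_compl_iff_disjoint_right, and_comm]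
  rw [hs, Finset.card_powersetCard, Finset.card_compl, Fintype.card_fin]

-- In this section `k = m + 2` and `d = c + 1`, so that `k - 1` and `d - 1` need no truncated
-- subtraction.
section scheme
variable {m c : ℕ}

lemma sum_out_mem (i : Fin (m + 2)) :
    ∑ y : Out (m + 2) (c + 1), (if i ∈ y.1 then (1:ℝ) else 0) = ((m + 1).choose c : ℕ) := by
  have h0 := sum_out_disjoint (d := c + 1) (∅ : Finset (Fin (m + 2)))
  have h1 := sum_out_disjoint (d := c + 1) ({i} : Finset (Fin (m + 2)))
  have e : ∀ y : Out (m + 2) (c + 1), (if i ∈ y.1 then (1:ℝ) else 0)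
      = (if Disjoint y.1 ∅ then (1:ℝ) else 0) - (if Disjoint y.1 {i} then (1:ℝ) else 0) := by
    intro y
    simp only [Finset.disjoint_empty_right, Finset.disjoint_singleton_right, if_true]
    by_cases h : i ∈ y.1 <;> simp [h]
  rw [Finset.sum_congr rfl fun y _ => e y, Finset.sum_sub_distrib, h0, h1]
  simp only [Finset.card_empty, Finset.card_singleton, Nat.sub_zero]
  rw [show m + 2 - 1 = m + 1 by omega, show m + 2 = (m + 1) + 1 by omega, Nat.choose_succ_succ' (m + 1)]
  push_cast; ring

lemma sum_out_notMem (i : Fin (m + 2)) :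
    ∑ y : Out (m + 2) (c + 1), (if i ∈ y.1 then (0:ℝ) else 1) = ((m + 1).choose (c + 1) : ℕ) := by
  have h1 := sum_out_disjoint (d := c + 1) ({i} : Finset (Fin (m + 2)))
  rw [Finset.card_singleton, show m + 2 - 1 = m + 1 by omega] at h1
  rw [← h1]
  refine Finset.sum_congr rfl fun y _ => ?_
  by_cases h : i ∈ y.1 <;> simp [h]

lemma sum_out_mem_notMem {i j : Fin (m + 2)} (hij : i ≠ j) :
    ∑ y : Out (m + 2) (c + 1), (if i ∈ y.1 ∧ j ∉ y.1 then (1:ℝ) else 0) = (m.choose c : ℕ) := by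
  have h1 := sum_out_disjoint (d := c + 1) ({j} : Finset (Fin (m + 2)))
  have h2 := sum_out_disjoint (d := c + 1) ({i, j} : Finset (Fin (m + 2)))
  have e : ∀ y : Out (m + 2) (c + 1), (if i ∈ y.1 ∧ j ∉ y.1 then (1:ℝ) else 0)
      = (if Disjoint y.1 {j} then (1:ℝ) else 0) - (if Disjoint y.1 {i, j} then (1:ℝ) else 0) := by
    intro y
    simp only [Finset.disjoint_insert_right, Finset.disjoint_singleton_right]
    by_cases h : i ∈ y.1 <;> by_cases h' : j ∈ y.1 <;> simp [h, h']
  rw [Finset.sum_congr rfl fun y _ => e y, Finset.sum_sub_distrib, h1, h2,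
    Finset.card_singleton, Finset.card_pair hij, show m + 2 - 1 = m + 1 by omega,
    show m + 2 - 2 = m by omega, Nat.choose_succ_succ' m]
  push_cast; ring

/-- Positivity of the normalizing constant of the scheme. -/
lemma schemeZ_pos (hc : c ≤ m) (ε : ℝ) :
    0 < ((m + 1).choose c : ℝ) * Real.exp ε + ((m + 1).choose (c + 1) : ℝ) := by
  have h1 : 0 < (m + 1).choose c := Nat.choose_pos (by omega)
  have h2 : 0 < ((m + 1).choose c : ℝ) := by exact_mod_cast h1
  positivity

lemma schemeP_eq (ε : ℝ) (i : Fin (m + 2)) (y : Out (m + 2) (c + 1)) :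
    schemeP (m + 2) ε (c + 1) i y = (if i ∈ y.1 then Real.exp ε else 1) /
      (((m + 1).choose c : ℝ) * Real.exp ε + ((m + 1).choose (c + 1) : ℝ)) := rfl

lemma schemeP_nonneg (hc : c ≤ m) (ε : ℝ) (i : Fin (m + 2)) (y : Out (m + 2) (c + 1)) :
    0 ≤ schemeP (m + 2) ε (c + 1) i y := by
  rw [schemeP_eq]
  have := schemeZ_pos hc ε
  have := Real.exp_pos ε
  split_ifs <;> positivity

lemma sum_schemeP (hc : c ≤ m) (ε : ℝ) (i : Fin (m + 2)) :
    ∑ y, schemeP (m + 2) ε (c + 1) i y = 1 := by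
  have hZ := (schemeZ_pos hc ε).ne'
  simp_rw [schemeP_eq]
  rw [← Finset.sum_div, div_eq_one_iff_eq hZ]
  have e : ∀ y : Out (m + 2) (c + 1), (if i ∈ y.1 then Real.exp ε else 1)
      = Real.exp ε * (if i ∈ y.1 then (1:ℝ) else 0) + (if i ∈ y.1 then (0:ℝ) else 1) := by
    intro y; by_cases h : i ∈ y.1 <;> simp [h]
  rw [Finset.sum_congr rfl fun y _ => e y, Finset.sum_add_distrib, ← Finset.mul_sum, sum_out_mem,
    sum_out_notMem]
  ring

/-- Under the scheme, the affine function of the indicator of `i` used by the empirical estimator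
has conditional mean the indicator of the input being `i`. -/
lemma scheme_unbiased (hc : c ≤ m) {ε : ℝ} (hε : 0 < ε) (i j : Fin (m + 2)) :
    Aconst (m + 2) (c + 1) ε *
      ∑ y, schemeP (m + 2) ε (c + 1) j y * (if i ∈ y.1 then (1:ℝ) else 0)
      = (if i = j then 1 else 0) + Bconst (m + 2) (c + 1) ε := by
  have he : 1 < Real.exp ε := by simpa using hε
  have hZ := schemeZ_pos hc ε
  have hcm : (c:ℝ) ≤ m := by exact_mod_cast hc
  have ha : 0 < (m.choose c : ℝ) := by exact_mod_cast Nat.choose_pos hc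
  have r1 : (m.choose c : ℝ) * (m + 1) = (m + 1).choose c * (m + 1 - c) := by
    have := Nat.choose_mul_succ_eq m c
    have h' : ((m.choose c * (m + 1) : ℕ) : ℝ) = (((m + 1).choose c * (m + 1 - c) : ℕ) : ℝ) := by
      rw [this]
    push_cast [Nat.cast_sub (show c ≤ m + 1 by omega)] at h'
    exact h'
  have r2 : ((m:ℝ) + 1) * m.choose c = (m + 1).choose (c + 1) * (c + 1) := by
    exact_mod_cast Nat.add_one_mul_choose_eq m c
  set e := Real.exp ε with he'
  set a : ℝ := (m.choose c : ℝ) with ha'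
  set N1 : ℝ := ((m + 1).choose c : ℝ) with hN1
  set N0 : ℝ := ((m + 1).choose (c + 1) : ℝ) with hN0
  have hsum : ∑ y, schemeP (m + 2) ε (c + 1) j y * (if i ∈ y.1 then (1:ℝ) else 0)
      = (if i = j then e * N1 else e * (N1 - a) + a) / (N1 * e + N0) := by
    simp_rw [schemeP_eq, div_mul_eq_mul_div]
    rw [← Finset.sum_div]
    congr 1
    split_ifs with hij
    · subst hij
      rw [hN1, ← sum_out_mem i, Finset.mul_sum]
      refine Finset.sum_congr rfl fun y _ => ?_
      by_cases h : i ∈ y.1 <;> simp [h, he']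
    · rw [hN1, ha', ← sum_out_mem i, ← sum_out_mem_notMem hij, ← Finset.sum_sub_distrib,
        Finset.mul_sum, ← Finset.sum_add_distrib]
      refine Finset.sum_congr rfl fun y _ => ?_
      by_cases h : i ∈ y.1 <;> by_cases h' : j ∈ y.1 <;> simp [h, h', he']
  rw [hsum]
  have hmc : 0 < (m:ℝ) + 1 - c := by linarith
  have hN1e : N1 = a * (m + 1) / (m + 1 - c) := by rw [r1]; field_simp
  have hN0e : N0 = a * (m + 1) / (c + 1) := by rw [mul_comm a, r2]; field_simp
  have he1 : 0 < e - 1 := by linarith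
  have hA : Aconst (m + 2) (c + 1) ε = (N1 * e + N0) / (a * (e - 1)) := by
    unfold Aconst
    rw [hN1e, hN0e, ← he']
    push_cast
    rw [show (m:ℝ) + 2 - (c + 1) = m + 1 - c by ring]
    field_simp
    ring
  rw [hA, div_mul_div_comm, mul_comm (a * (e - 1)), mul_div_mul_left _ _ hZ.ne']
  unfold Bconst
  rw [← he']
  push_cast
  rw [show (m:ℝ) + 2 - (c + 1) = m + 1 - c by ring, hN1e]
  split_ifs
  · field_simp
    ring
  · field_simp
    ring

end scheme

/-! ### The risk of the empirical estimator -/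

lemma marginal_schemeKernel (k d : ℕ) (ε : ℝ) (p : Fin k → ℝ) :
    marginal (schemeKernel k ε d) p = ∑ i, ENNReal.ofReal (p i) •
      ∑ y : Out k d, ENNReal.ofReal (schemeP k ε d i y) • Measure.dirac y := rfl

section scheme
variable {m c : ℕ}

lemma isProb_marginal_scheme (hc : c ≤ m) (ε : ℝ) {p : Fin (m + 2) → ℝ} (hp : p ∈ simplex (m + 2)) :
    IsProbabilityMeasure (marginal (schemeKernel (m + 2) ε (c + 1)) p) := by
  constructor
  rw [marginal_schemeKernel]
  simp only [Measure.finsetSum_apply, Measure.smul_apply, smul_eq_mul, measure_univ, mul_one]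
  simp_rw [← ENNReal.ofReal_sum_of_nonneg fun y _ => schemeP_nonneg hc ε _ y, sum_schemeP hc]
  rw [ENNReal.ofReal_one]
  simp_rw [mul_one]
  rw [← ENNReal.ofReal_sum_of_nonneg fun i _ => hp.1 i, hp.2, ENNReal.ofReal_one]

lemma integral_marginal_scheme (hc : c ≤ m) (ε : ℝ) {p : Fin (m + 2) → ℝ}
    (hp : p ∈ simplex (m + 2)) (g : Out (m + 2) (c + 1) → ℝ) :
    ∫ y, g y ∂(marginal (schemeKernel (m + 2) ε (c + 1)) p)
      = ∑ i, p i * ∑ y, schemeP (m + 2) ε (c + 1) i y * g y := by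
  rw [marginal_schemeKernel]
  have hd : ∀ (a : ℝ) (y : Out (m + 2) (c + 1)),
      Integrable g (ENNReal.ofReal a • Measure.dirac y) := fun a y =>
    (integrable_dirac (by simp)).smul_measure ENNReal.ofReal_ne_top
  have hi : ∀ i, Integrable g (∑ y : Out (m + 2) (c + 1),
      ENNReal.ofReal (schemeP (m + 2) ε (c + 1) i y) • Measure.dirac y) := fun i =>
    integrable_finsetSum_measure.2 fun y _ => hd _ _
  rw [integral_finsetSum_measure fun i _ => (hi i).smul_measure ENNReal.ofReal_ne_top]
  refine Finset.sum_congr rfl fun i _ => ?_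
  rw [integral_smul_measure, integral_finsetSum_measure fun y _ => hd _ _,
    ENNReal.toReal_ofReal (hp.1 i), smul_eq_mul]
  congr 1
  refine Finset.sum_congr rfl fun y _ => ?_
  rw [integral_smul_measure, integral_dirac, ENNReal.toReal_ofReal (schemeP_nonneg hc ε i y),
    smul_eq_mul]

/-- `A q_i = p_i + B`, where `q_i` is the probability that the output contains `i`. -/
lemma marginal_unbiased (hc : c ≤ m) {ε : ℝ} (hε : 0 < ε) {p : Fin (m + 2) → ℝ}
    (hp : p ∈ simplex (m + 2)) (i : Fin (m + 2)) :
    Aconst (m + 2) (c + 1) ε * ∫ y, (if i ∈ y.1 then (1:ℝ) else 0)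
        ∂(marginal (schemeKernel (m + 2) ε (c + 1)) p)
      = p i + Bconst (m + 2) (c + 1) ε := by
  rw [integral_marginal_scheme hc ε hp, Finset.mul_sum]
  simp_rw [mul_left_comm (Aconst _ _ _), scheme_unbiased hc hε, mul_add]
  rw [Finset.sum_add_distrib, ← Finset.sum_mul, hp.2]
  simp

/-- The inclusion probabilities add up to the size of the output. -/
lemma sum_inclusion (hc : c ≤ m) (ε : ℝ) {p : Fin (m + 2) → ℝ} (hp : p ∈ simplex (m + 2)) :
    ∑ i, ∫ y, (if i ∈ y.1 then (1:ℝ) else 0) ∂(marginal (schemeKernel (m + 2) ε (c + 1)) p)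
      = c + 1 := by
  have := isProb_marginal_scheme hc ε hp
  rw [← integral_finsetSum _ fun i _ => Integrable.of_finite]
  have : ∀ y : Out (m + 2) (c + 1), ∑ i, (if i ∈ y.1 then (1:ℝ) else 0) = c + 1 := by
    intro y
    rw [Finset.sum_boole, Finset.filter_univ_mem, y.2]
    push_cast; rfl
  simp_rw [this]
  simp

/-- The variance constant of the empirical estimator at the uniform distribution. -/
lemma Aconst_sq_eq (hc : c ≤ m) {ε : ℝ} (hε : 0 < ε) :
    Aconst (m + 2) (c + 1) ε ^ 2 * ((c + 1) - (c + 1) ^ 2 / (m + 2))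
      = (m + 2) * Mconst (m + 2) ε (c + 1) := by
  have he : 1 < Real.exp ε := by simpa using hε
  have he1 : 0 < Real.exp ε - 1 := by linarith
  have hcm : (c:ℝ) ≤ m := by exact_mod_cast hc
  have hmc : 0 < (m:ℝ) + 1 - c := by linarith
  unfold Aconst Mconst gfun
  push_cast
  rw [show (m:ℝ) + 2 - (c + 1) = m + 1 - c by ring]
  field_simp
  ring

end scheme

/-- Power-mean inequality, through the tangent line of the concave power `v`. -/
lemma sum_rpow_le_mean {k : ℕ} {v a : ℝ} (hv0 : 0 ≤ v) (hv1 : v ≤ 1) (ha : 0 < a)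
    {x : Fin k → ℝ} (hx : ∀ i, 0 ≤ x i) (hs : ∑ i, x i ≤ k * a) :
    ∑ i, x i ^ v ≤ k * a ^ v := by
  have h : ∀ i, x i ^ v ≤ a ^ v * (1 + v * (x i / a - 1)) := by
    intro i
    have h1 := rpow_one_add_le_one_add_mul_self (s := x i / a - 1)
      (by have := div_nonneg (hx i) ha.le; linarith) hv0 hv1
    rw [add_sub_cancel, Real.div_rpow (hx i) ha.le, div_le_iff₀ (by positivity)] at h1
    linarith
  calc ∑ i, x i ^ v ≤ ∑ i, a ^ v * (1 + v * (x i / a - 1)) := Finset.sum_le_sum fun i _ => h i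
    _ = a ^ v * (k + v * ((∑ i, x i) / a - k)) := by
        rw [← Finset.mul_sum, Finset.sum_add_distrib, ← Finset.mul_sum, Finset.sum_sub_distrib,
          Finset.sum_div]
        simp
    _ ≤ a ^ v * (k + v * 0) := by
        gcongr
        rw [sub_nonpos, div_le_iff₀ ha]
        exact hs
    _ = k * a ^ v := by ring

/-- The risk of the empirical estimator under the subset-selection scheme. -/
lemma risk_upper {k d : ℕ} (hd1 : 1 ≤ d) (hd2 : d ≤ k - 1) {ε u : ℝ} (hε : 0 < ε)
    (hu1 : 1 ≤ u) (hu2 : u ≤ 2) {η : ℝ} (hη : 0 < η) :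
    ∀ᶠ n : ℕ in atTop, risk k n u (schemeKernel k ε d) (empEst k d n ε)
      ≤ ENNReal.ofReal ((1 / √n) ^ u * (k * Cmom u * Mconst k ε d ^ (u / 2) + η)) := by
  obtain ⟨m, rfl⟩ : ∃ m, k = m + 2 := ⟨k - 2, by omega⟩
  obtain ⟨c, rfl⟩ : ∃ c, d = c + 1 := ⟨d - 1, by omega⟩
  have hc : c ≤ m := by omega
  set k := m + 2 with hk
  set A := Aconst k (c + 1) ε with hA
  set B := Bconst k (c + 1) ε with hB
  set M := Mconst k ε (c + 1) with hM
  have hkn : 0 < k := by omega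
  have hk0 : (0:ℝ) < k := by exact_mod_cast hkn
  have he : 1 < Real.exp ε := by simpa using hε
  have hMpos : 0 < M := by
    have h1 := gfun_pos (ε := ε) hd1 hd2
    have h2 : 0 < Real.exp ε - 1 := by linarith
    have h3 : 0 < (k:ℝ) - 1 := by
      have : (0:ℝ) ≤ m := Nat.cast_nonneg m
      rw [hk]; push_cast; linarith
    rw [hM, Mconst]
    positivity
  -- the width of the smoothing
  obtain ⟨δ, hδ, hδη⟩ : ∃ δ : ℝ, 0 < δ ∧ k * δ ^ u ≤ η / 2 := by
    have hb : 0 < η / (2 * (k:ℝ)) := by positivity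
    refine ⟨(η / (2 * k)) ^ (1 / u), Real.rpow_pos_of_pos hb _, ?_⟩
    rw [← Real.rpow_mul hb.le, one_div_mul_cancel (by linarith), Real.rpow_one]
    apply le_of_eq; field_simp
  obtain ⟨K, hK, hLin⟩ := lindeberg_bound hδ hu1 hu2
  have hlim : Tendsto (fun n : ℕ => k * (K * |A| ^ 3) / √n) atTop (nhds 0) :=
    (tendsto_const_nhds).div_atTop (Real.tendsto_sqrt_atTop.comp tendsto_natCast_atTop_atTop)
  filter_upwards [hlim.eventually_lt_const (half_pos hη), eventually_gt_atTop 0] with n hn hn0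
  have hn0' : (0:ℝ) < n := by exact_mod_cast hn0
  have hsq : 0 < √(n:ℝ) := Real.sqrt_pos.2 hn0'
  refine iSup₂_le fun p hp => ?_
  have hprob := isProb_marginal_scheme hc ε hp
  set P := marginal (schemeKernel k ε (c + 1)) p with hP
  set q : Fin k → ℝ := fun i => ∫ y, (if i ∈ y.1 then (1:ℝ) else 0) ∂P with hq
  have hAq : ∀ i, A * q i = p i + B := fun i => marginal_unbiased hc hε hp i
  have hqsum : ∑ i, q i = c + 1 := sum_inclusion hc ε hp
  have hint : ∀ g : Out k (c + 1) → ℝ, Integrable g P := fun g => Integrable.of_finite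
  have hq0 : ∀ i, 0 ≤ q i := fun i => integral_nonneg fun y => by
    dsimp only; split_ifs <;> norm_num
  have hq1 : ∀ i, q i ≤ 1 := fun i => by
    have := integral_mono (hint fun y => if i ∈ y.1 then (1:ℝ) else 0) (hint fun _ => 1)
      fun y => by dsimp only; split_ifs <;> norm_num
    simpa using this
  have hqq : ∀ i, 0 ≤ q i * (1 - q i) := fun i => mul_nonneg (hq0 i) (by linarith [hq1 i])
  set ξ : Fin k → Out k (c + 1) → ℝ := fun i y =>
    A / √n * ((if i ∈ y.1 then (1:ℝ) else 0) - q i) with hξ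
  have hξ0 : ∀ i, ∫ y, ξ i y ∂P = 0 := fun i => by
    simp only [hξ]
    rw [integral_const_mul, integral_sub (hint _) (hint _)]
    simp [hq]
  have hξb : ∀ i y, |ξ i y| ≤ |A| / √n := fun i y => by
    simp only [hξ]
    rw [abs_mul, abs_div, abs_of_pos hsq]
    refine mul_le_of_le_one_right (by positivity) ?_
    rw [abs_le]
    have := hq0 i
    have := hq1 i
    split_ifs <;> constructor <;> linarith
  set s : Fin k → ℝ := fun i => √(A ^ 2 * (q i * (1 - q i))) / √n with hs
  have hs0 : ∀ i, 0 ≤ s i := fun i => by positivity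
  have hξv : ∀ i, ∫ y, ξ i y ^ 2 ∂P = s i ^ 2 := fun i => by
    have e : ∀ y, ξ i y ^ 2 = A ^ 2 / n * ((1 - 2 * q i) * (if i ∈ y.1 then (1:ℝ) else 0)
        + q i ^ 2) := fun y => by
      simp only [hξ]
      rw [mul_pow, div_pow, Real.sq_sqrt hn0'.le]
      split_ifs <;> ring
    simp_rw [e]
    rw [integral_const_mul, integral_add (hint _) (hint _), integral_const_mul]
    simp only [hs]
    rw [div_pow, Real.sq_sqrt hn0'.le, Real.sq_sqrt (mul_nonneg (sq_nonneg _) (hqq i))]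
    change A ^ 2 / n * ((1 - 2 * q i) * q i + ∫ _, q i ^ 2 ∂P) = _
    simp
    ring
  -- the normalized error of the estimator is a sum of independent centred terms
  have herr : ∀ i (y : Fin n → Out k (c + 1)),
      |empEst k (c + 1) n ε y i - p i| = 1 / √n * |∑ j, ξ i (y j)| := by
    intro i y
    have h1 : ∑ j, ξ i (y j) = A / √n * (tcount i y - n * q i) := by
      simp only [hξ, tcount]
      rw [← Finset.mul_sum, Finset.sum_sub_distrib, Finset.sum_boole]
      simp
    have h2 : empEst k (c + 1) n ε y i - p i = 1 / √n * ∑ j, ξ i (y j) := by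
      rw [h1, empEst, ← hA, ← hB]
      have : 1 / √(n:ℝ) * (A / √n * (tcount i y - n * q i)) = A * (tcount i y - n * q i) / n := by
        rw [← mul_assoc, div_mul_div_comm, one_mul, Real.mul_self_sqrt hn0'.le]
        ring
      rw [this]
      field_simp
      linear_combination (n:ℝ) * hAq i
    rw [h2, abs_mul, abs_of_pos (by positivity : 0 < 1 / √(n:ℝ))]
  have hvar : ∑ i, A ^ 2 * (q i * (1 - q i)) ≤ k * M := by
    have hcs : (c + 1 : ℝ) ^ 2 ≤ k * ∑ i, q i ^ 2 := by
      have := sq_sum_le_card_mul_sum_sq (s := Finset.univ) (f := q)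
      rw [hqsum, Finset.card_univ, Fintype.card_fin] at this
      exact this
    have hAM := Aconst_sq_eq hc hε
    rw [← hA, ← hM] at hAM
    have hkc : (m:ℝ) + 2 = k := by rw [hk]; push_cast; ring
    rw [hkc] at hAM
    rw [← hAM, ← Finset.mul_sum]
    refine mul_le_mul_of_nonneg_left ?_ (sq_nonneg _)
    have : ∑ i, q i * (1 - q i) = (c + 1) - ∑ i, q i ^ 2 := by
      rw [← hqsum, ← Finset.sum_sub_distrib]
      exact Finset.sum_congr rfl fun i _ => by ring
    rw [this]
    have : (c + 1 : ℝ) ^ 2 / k ≤ ∑ i, q i ^ 2 := by rw [div_le_iff₀ hk0]; linarith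
    linarith
  have hmean : ∑ i, (√n * s i) ^ u ≤ k * M ^ (u / 2) := by
    have e : ∀ i, (√n * s i) ^ u = (A ^ 2 * (q i * (1 - q i))) ^ (u / 2) := fun i => by
      simp only [hs]
      rw [mul_div_cancel₀ _ hsq.ne', Real.sqrt_eq_rpow, ← Real.rpow_mul
        (mul_nonneg (sq_nonneg _) (hqq i))]
      congr 1; ring
    simp_rw [e]
    exact sum_rpow_le_mean (by linarith) (by linarith) hMpos
      (fun i => mul_nonneg (sq_nonneg _) (hqq i)) hvar
  have hr0 : 0 ≤ (1 / √(n:ℝ)) ^ u := by positivity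
  have hC := (Cmom_pos hu1 hu2).le
  calc ∫⁻ y, ENNReal.ofReal (∑ i, |empEst k (c + 1) n ε y i - p i| ^ u)
        ∂(Measure.pi fun _ : Fin n => P)
      = ∫⁻ y, ∑ i, ENNReal.ofReal ((1 / √n) ^ u) * ENNReal.ofReal (|∑ j, ξ i (y j)| ^ u)
        ∂(Measure.pi fun _ : Fin n => P) := by
        refine lintegral_congr fun y => ?_
        rw [ENNReal.ofReal_sum_of_nonneg fun i _ => by positivity]
        refine Finset.sum_congr rfl fun i _ => ?_
        rw [herr, Real.mul_rpow (by positivity) (abs_nonneg _), ENNReal.ofReal_mul hr0]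
    _ = ENNReal.ofReal ((1 / √n) ^ u) * ∑ i, ∫⁻ y, ENNReal.ofReal (|∑ j, ξ i (y j)| ^ u)
        ∂(Measure.pi fun _ : Fin n => P) := by
        rw [lintegral_finsetSum _ fun i _ => measurable_of_finite _, Finset.mul_sum]
        exact Finset.sum_congr rfl fun i _ => lintegral_const_mul' _ _ ENNReal.ofReal_ne_top
    _ ≤ ENNReal.ofReal ((1 / √n) ^ u) * ∑ i, ENNReal.ofReal ((√n * s i) ^ u * Cmom u + δ ^ u
          + n * (K * (|A| / √n) ^ 3)) := by
        gcongr with i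
        exact hLin P (measurable_of_finite _) (hξb i) (hξ0 i) (hs0 i) (hξv i) n
    _ = ENNReal.ofReal ((1 / √n) ^ u * ((∑ i, (√n * s i) ^ u) * Cmom u + k * δ ^ u
          + k * (K * |A| ^ 3) / √n)) := by
        rw [← ENNReal.ofReal_sum_of_nonneg fun i _ => by have := hs0 i; positivity,
          ← ENNReal.ofReal_mul hr0]
        congr 2
        rw [Finset.sum_add_distrib, Finset.sum_add_distrib, ← Finset.sum_mul]
        simp only [Finset.sum_const, Finset.card_univ, Fintype.card_fin, nsmul_eq_mul]
        congr 1
        have : (n:ℝ) * (K * (|A| / √n) ^ 3) = K * |A| ^ 3 / √n := by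
          nth_rewrite 1 [← Real.sq_sqrt hn0'.le]
          field_simp
        rw [this]
        ring
    _ ≤ _ := by
        refine ENNReal.ofReal_le_ofReal (mul_le_mul_of_nonneg_left ?_ hr0)
        have := mul_le_mul_of_nonneg_right hmean hC
        linarith

/-! ### The ratio of the risks -/

theorem statement0 {Y : Type} [MeasurableSpace Y] (k : ℕ) (hk : 2 ≤ k) (ε u : ℝ)
    (hε : 0 < ε) (hu1 : 1 ≤ u) (hu2 : u ≤ 2)
    (dstar : ℕ) (hd : IsOptDstar k ε dstar)
    (Q : Kernel (Fin k) Y) (hQ : IsPrivate ε Q) :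
    1 ≤ Filter.liminf (fun n : ℕ =>
        minimaxRisk k n u Q /
          risk k n u (schemeKernel k ε dstar) (empEst k dstar n ε)) atTop := by
  obtain ⟨hd1, hd2⟩ := Finset.mem_Icc.1 hd.1
  set x : ℝ := k * Cmom u * Mconst k ε dstar ^ (u / 2) with hx
  have hxpos : 0 < x := by
    have h1 := gfun_pos (ε := ε) hd1 hd2
    have he : 1 < Real.exp ε := by simpa using hε
    have h2 : 0 < Real.exp ε - 1 := by linarith
    have hk2 : (2:ℝ) ≤ k := by exact_mod_cast hk
    have h3 : 0 < (k:ℝ) - 1 := by linarith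
    have hC := Cmom_pos hu1 hu2
    have hM : 0 < Mconst k ε dstar := by rw [Mconst]; positivity
    rw [hx]; positivity
  refine le_of_forall_lt fun r hr => ?_
  -- `r < r' < 1`, and `η` is chosen so that `(x - η) / (x + η) = r'`
  lift r to ℝ≥0 using hr.ne_top
  obtain ⟨r', hrr', hr'1⟩ := exists_between hr
  lift r' to ℝ≥0 using hr'1.ne_top
  have hr1 : (r':ℝ) < 1 := by exact_mod_cast hr'1
  have hr0 : (0:ℝ) ≤ r' := r'.2
  set η : ℝ := x * (1 - r') / (1 + r') with hη
  have hηpos : 0 < η := by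
    have : 0 < 1 - (r':ℝ) := by linarith
    positivity
  have hηx : r' * (x + η) = x - η := by
    rw [hη]; field_simp; ring
  refine lt_of_lt_of_le hrr' (le_liminf_of_le (by isBoundedDefault) ?_)
  filter_upwards [minimax_lower hk hε hu1 hu2 hd Q hQ hηpos,
    risk_upper hd1 hd2 hε hu1 hu2 hηpos, eventually_gt_atTop 0] with n h1 h2 hn
  have hn0 : (0:ℝ) < n := by exact_mod_cast hn
  have hs : 0 < (1 / √(n:ℝ)) ^ u := by positivity
  refine le_trans ?_ (ENNReal.div_le_div h1 h2)
  rw [← hx, ← ENNReal.ofReal_div_of_pos (by positivity), ← hηx,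
    mul_div_mul_left _ _ hs.ne', mul_div_assoc, div_self (by positivity), mul_one,
    ENNReal.ofReal_coe_nnreal]
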